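/- arXiv:1306.4141 — 7 statements merged into one kernel-verified Lean document; each statement's English description precedes it below -/
import Mathlib

section
/- Let n ≥ 1 and let P, Q ∈ ℂ[X] be coprime polynomials with deg P = deg Q = n. Let p be the number of distinct complex roots of P and q the number of distinct complex roots of Q. Then P ≠ Q and deg(P − Q) ≥ (n + 1) − (p + q), i.e. deg(P − Q) + p + q ≥ n + 1. -/
open Polynomial

open UniqueFactorizationMonoid in
lemma rad_le (P : ℂ[X]) (h0 : P ≠ 0) :
    (radical P).natDegree ≤ P.roots.toFinset.card := by
  have hs : P = C P.leadingCoeff * (P.roots.map (fun a => X - C a)).prod :=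
    (IsAlgClosed.splits P).eq_prod_roots
  have hd : radical P ∣ ∏ a ∈ P.roots.toFinset, (X - C a) := by
    rw [← exists_dvd_pow_iff_radical_dvd h0]
    obtain ⟨n, hn⟩ := Multiset.le_smul_dedup P.roots
    refine ⟨n, ?_⟩
    have h1 := Multiset.prod_dvd_prod_of_le (Multiset.map_le_map (f := fun a : ℂ => X - C a) hn)
    rw [Multiset.map_nsmul, Multiset.prod_nsmul] at h1
    have h2 : IsUnit (C P.leadingCoeff) := by
      simpa using h0
    have h3 : P ∣ (P.roots.map (fun a => X - C a)).prod := by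
      conv_lhs => rw [hs]
      exact (h2.mul_left_dvd).2 dvd_rfl
    exact h3.trans h1
  have hm : (∏ a ∈ P.roots.toFinset, (X - C a)) ≠ 0 :=
    Finset.prod_ne_zero_iff.2 (fun a _ => X_sub_C_ne_zero a)
  refine (natDegree_le_of_dvd hd hm).trans ?_
  rw [natDegree_prod _ _ (fun a _ => X_sub_C_ne_zero a)]
  simp

/-- Davenport-type bound: for coprime `P, Q ∈ ℂ[X]` of equal degree `n ≥ 1`,
with `p` and `q` distinct roots respectively, `P ≠ Q` and
`deg (P - Q) ≥ (n + 1) - (p + q)`. -/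
theorem stmt0 (n : ℕ) (hn : 1 ≤ n) (P Q : ℂ[X])
    (hcop : IsCoprime P Q)
    (hP : P.natDegree = n) (hQ : Q.natDegree = n) :
    P ≠ Q ∧
      (P - Q).natDegree + P.roots.toFinset.card + Q.roots.toFinset.card ≥ n + 1 := by
  have hP0 : P ≠ 0 := by rintro rfl; simp at hP; omega
  have hQ0 : Q ≠ 0 := by rintro rfl; simp at hQ; omega
  have hne : P ≠ Q := by
    rintro rfl
    have := natDegree_eq_zero_of_isUnit (isCoprime_self.1 hcop)
    omega
  refine ⟨hne, ?_⟩
  have hc : Q - P ≠ 0 := sub_ne_zero.2 hne.symm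
  rcases Polynomial.abc hP0 (neg_ne_zero.2 hQ0) hc hcop.neg_right (by ring) with h | h
  · have h1 := h.1
    have hd : UniqueFactorizationMonoid.radical (P * -Q * (Q - P)) ∣
        UniqueFactorizationMonoid.radical P * UniqueFactorizationMonoid.radical Q *
          UniqueFactorizationMonoid.radical (Q - P) := by
      refine UniqueFactorizationMonoid.radical_mul_dvd.trans (mul_dvd_mul_right ?_ _)
      refine UniqueFactorizationMonoid.radical_mul_dvd.trans ?_
      rw [UniqueFactorizationDomain.radical_neg]
    have hr : ∀ a : ℂ[X], UniqueFactorizationMonoid.radical a ≠ 0 :=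
      fun a => UniqueFactorizationMonoid.radical_ne_zero
    have h2 := natDegree_le_of_dvd hd (mul_ne_zero (mul_ne_zero (hr _) (hr _)) (hr _))
    rw [natDegree_mul (mul_ne_zero (hr _) (hr _)) (hr _), natDegree_mul (hr _) (hr _)] at h2
    have h3 := rad_le P hP0
    have h4 := rad_le Q hQ0
    have h5 := natDegree_radical_le (a := Q - P)
    rw [natDegree_sub (p := Q) (q := P)] at h5
    omega
  · have := derivative_eq_zero.1 h.1
    omega
end

section
/- Let n ≥ 1 and let P, Q ∈ ℂ[X] be coprime monic polynomials of degree n, and set R = P − Q (which is nonzero). Let p, q, r denote the numbers of distinct complex roots of P, Q, R respectively (with r = 0 if R is a nonzero constant). For y ∈ ℂ let n_y denote the number of distinct complex roots of the polynomial (1 − y)·P + y·Q (which is monic of degree n). Then n_y = n for all but finitely many y ∈ ℂ, and r = (n + 1) − (p + q) + Σ_{y ∈ ℂ \ {0,1}} (n − n_y), where the sum has only finitely many nonzero terms. -/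
open Polynomial

lemma aux_mult (F G : ℂ[X]) (a : ℂ) (hF : F ≠ 0) (hFa : F.eval a = 0) (hG : G.eval a ≠ 0) :
    rootMultiplicity a (derivative F * G - F * derivative G) = rootMultiplicity a F - 1 := by
  obtain ⟨H, hH, hHd⟩ := exists_eq_pow_rootMultiplicity_mul_and_not_dvd F hF a
  have hm : 0 < rootMultiplicity a F := (rootMultiplicity_pos hF).2 hFa
  obtain ⟨k, hk⟩ : ∃ k, rootMultiplicity a F = k + 1 := ⟨_, (Nat.succ_pred_eq_of_pos hm).symm⟩
  have hHa : H.eval a ≠ 0 := fun h => hHd (dvd_iff_isRoot.2 h)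
  rw [hk] at hH ⊢
  set K : ℂ[X] := C ((k : ℂ) + 1) * H * G + (X - C a) * (derivative H * G - H * derivative G) with hK
  have hKa : K.eval a ≠ 0 := by
    simp [hK, hHa, hG]
    exact_mod_cast Nat.succ_ne_zero k
  have hK0 : K ≠ 0 := by rintro h; simp [h] at hKa
  have e : derivative F * G - F * derivative G = (X - C a) ^ k * K := by
    rw [hH, hK]
    simp only [derivative_mul, derivative_X_sub_C_pow]
    simp
    ring
  rw [e, rootMultiplicity_mul (mul_ne_zero (pow_ne_zero _ (X_sub_C_ne_zero a)) hK0),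
    rootMultiplicity_X_sub_C_pow, rootMultiplicity_eq_zero hKa]
  simp

lemma aux_sum (F : ℂ[X]) : ∑ a ∈ F.roots.toFinset, rootMultiplicity a F = F.natDegree := by
  have h := Multiset.toFinset_sum_count_eq F.roots
  simp only [count_roots] at h
  rw [h]
  exact (splits_iff_card_roots.1 (IsAlgClosed.splits F))

lemma aux_sum2 (F G : ℂ[X]) (hF : F ≠ 0) (h : ∀ a, F.eval a = 0 → G.eval a ≠ 0) :
    ∑ a ∈ F.roots.toFinset, rootMultiplicity a (derivative F * G - F * derivative G)
      + F.roots.toFinset.card = F.natDegree := by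
  rw [← aux_sum F, Finset.card_eq_sum_ones, ← Finset.sum_add_distrib]
  refine Finset.sum_congr rfl fun a ha => ?_
  have ha' : F.eval a = 0 := by simpa [hF] using ha
  have hm : 0 < rootMultiplicity a F := (rootMultiplicity_pos hF).2 ha'
  rw [aux_mult F G a hF ha' (h a ha')]
  omega

lemma aux_deg (P R : ℂ[X]) (hR : R ≠ 0) (hP : P ≠ 0) (hd : R.natDegree < P.natDegree) :
    derivative P * R - P * derivative R ≠ 0 ∧
    (derivative P * R - P * derivative R).natDegree + 1 = P.natDegree + R.natDegree := by
  set W := derivative P * R - P * derivative R with hW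
  have hXd : ∀ F : ℂ[X], (X * derivative F).natDegree ≤ F.natDegree := by
    intro F
    rw [natDegree_le_iff_coeff_eq_zero]
    intro N hN
    obtain ⟨k, rfl⟩ : ∃ k, N = k + 1 := ⟨N - 1, by omega⟩
    rw [coeff_X_mul, coeff_derivative, coeff_eq_zero_of_natDegree_lt hN, zero_mul]
  have hXc : ∀ F : ℂ[X], (X * derivative F).coeff F.natDegree = F.natDegree * F.leadingCoeff := by
    intro F
    rcases h : F.natDegree with _ | k
    · simp
    · rw [coeff_X_mul, coeff_derivative, leadingCoeff, h]; push_cast; ring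
  have e : X * W = (X * derivative P) * R - P * (X * derivative R) := by rw [hW]; ring
  have hc : (X * W).coeff (P.natDegree + R.natDegree) ≠ 0 := by
    rw [e, coeff_sub, coeff_mul_add_eq_of_natDegree_le (hXd P) le_rfl,
      coeff_mul_add_eq_of_natDegree_le le_rfl (hXd R), hXc, hXc, coeff_natDegree, coeff_natDegree]
    have : (P.natDegree : ℂ) * P.leadingCoeff * R.leadingCoeff
        - P.leadingCoeff * (R.natDegree * R.leadingCoeff)
        = ((P.natDegree : ℂ) - R.natDegree) * (P.leadingCoeff * R.leadingCoeff) := by ring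
    rw [this]
    refine mul_ne_zero (sub_ne_zero.2 ?_) (mul_ne_zero (by simpa) (by simpa))
    exact_mod_cast hd.ne'
  have hle : (X * W).natDegree ≤ P.natDegree + R.natDegree := by
    rw [e]
    refine (natDegree_sub_le _ _).trans (max_le ?_ ?_)
    · exact natDegree_mul_le.trans (by gcongr; exact hXd P)
    · exact natDegree_mul_le.trans (by gcongr; exact hXd R)
  have hW0 : W ≠ 0 := by rintro h; simp [h] at hc
  refine ⟨hW0, ?_⟩
  rw [← natDegree_X_mul hW0]
  exact le_antisymm hle (le_natDegree_of_ne_zero hc)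

/-- Riemann–Hurwitz-type count of the distinct roots of `R = P - Q`:
`r = (n + 1) - (p + q) + Σ_{y ∉ {0,1}} (n - n_y)`, where
`n_y` is the number of distinct roots of `(1 - y)·P + y·Q`. -/
theorem stmt1 (n : ℕ) (hn : 1 ≤ n) (P Q : ℂ[X])
    (hcop : IsCoprime P Q) (hPm : P.Monic) (hQm : Q.Monic)
    (hP : P.natDegree = n) (hQ : Q.natDegree = n) :
    P - Q ≠ 0 ∧
    {y : ℂ | ((1 - C y) * P + C y * Q).roots.toFinset.card ≠ n}.Finite ∧
    (P - Q).roots.toFinset.card + (P.roots.toFinset.card + Q.roots.toFinset.card)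
      = (n + 1) +
        ∑ᶠ y ∈ {y : ℂ | y ≠ 0 ∧ y ≠ 1},
          (n - ((1 - C y) * P + C y * Q).roots.toFinset.card) := by
  classical
  have hP0 : P ≠ 0 := hPm.ne_zero
  have hR0 : P - Q ≠ 0 := by
    intro h
    rw [sub_eq_zero] at h
    rw [← h, isCoprime_self] at hcop
    have := natDegree_eq_zero_of_isUnit hcop
    omega
  have hRd : (P - Q).natDegree < P.natDegree := by
    refine natDegree_lt_natDegree hR0 (degree_sub_lt ?_ hP0 ?_)
    · rw [degree_eq_natDegree hP0, degree_eq_natDegree hQm.ne_zero, hP, hQ]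
    · rw [hPm.leadingCoeff, hQm.leadingCoeff]
  set R := P - Q with hR
  have hF : ∀ y : ℂ, (1 - C y) * P + C y * Q = P - C y * R := by
    intro y; rw [hR]; ring
  have hQF : Q = P - C 1 * R := by rw [hR]; simp
  have hPF : P = P - C 0 * R := by simp
  simp only [hF]
  set F : ℂ → ℂ[X] := fun y => P - C y * R with hFdef
  have hlt : ∀ y, (C y * R).natDegree < P.natDegree := fun y =>
    (natDegree_C_mul_le y R).trans_lt hRd
  have hFd : ∀ y, (F y).natDegree = n := fun y => by
    rw [hFdef, ← hP]; exact natDegree_sub_eq_left_of_natDegree_lt (hlt y)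
  have hF0 : ∀ y, F y ≠ 0 := fun y h => by
    have := hFd y; rw [h, natDegree_zero] at this; omega
  have hPR : ∀ a, R.eval a = 0 → P.eval a ≠ 0 := by
    intro a h1 h2
    obtain ⟨u, v, huv⟩ := hcop
    have h3 : Q.eval a = 0 := by
      rw [hR, eval_sub, h2] at h1; simpa using h1
    have := congrArg (eval a) huv
    simp [h2, h3] at this
  have hFev : ∀ y a, (F y).eval a = P.eval a - y * R.eval a := fun y a => by simp [hFdef]
  have hFR : ∀ y a, (F y).eval a = 0 → R.eval a ≠ 0 := by
    intro y a h h'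
    rw [hFev, h', mul_zero, sub_zero] at h
    exact hPR a h' h
  obtain ⟨hW0, hWd⟩ := aux_deg P R hR0 hP0 hRd
  set W := derivative P * R - P * derivative R with hW
  have hWF : ∀ y, derivative (F y) * R - F y * derivative R = W := by
    intro y; simp [hFdef, hW]; ring
  have hsF : ∀ y, ∑ a ∈ (F y).roots.toFinset, rootMultiplicity a W
      + (F y).roots.toFinset.card = n := by
    intro y
    have := aux_sum2 (F y) R (hF0 y) (hFR y)
    rwa [hWF, hFd] at this
  have hsR : ∑ a ∈ R.roots.toFinset, rootMultiplicity a W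
      + R.roots.toFinset.card = R.natDegree := by
    have := aux_sum2 R (-P) hR0 (fun a h => by simpa using hPR a h)
    have e : derivative R * (-P) - R * derivative (-P) = W := by simp [hW]; ring
    rwa [e] at this
  set T : Finset ℂ := insert 0 (insert 1 (W.roots.toFinset.image fun a => P.eval a / R.eval a))
    with hT
  have hmem : ∀ y a, (F y).eval a = 0 → P.eval a / R.eval a = y := by
    intro y a h
    rw [div_eq_iff (hFR y a h)]
    rw [hFev] at h
    linear_combination h
  have hout : ∀ y, y ∉ T → (F y).roots.toFinset.card = n := by
    intro y hy
    rw [← hsF y, Finset.sum_eq_zero, zero_add]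
    intro a ha
    have ha' : (F y).eval a = 0 := by simpa [hF0 y] using ha
    refine rootMultiplicity_eq_zero fun hr => hy ?_
    simp only [hT, Finset.mem_insert, Finset.mem_image]
    right; right
    exact ⟨a, by simpa [hW0] using hr, hmem y a ha'⟩
  refine ⟨hR0, T.finite_toSet.subset fun y hy => by_contra fun h => hy (hout y h), ?_⟩
  -- total count
  have htot : ∑ a ∈ R.roots.toFinset ∪ T.biUnion (fun y => (F y).roots.toFinset),
      rootMultiplicity a W = W.natDegree := by
    rw [← aux_sum W]
    symm
    refine Finset.sum_subset ?_ ?_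
    · intro a ha
      by_cases h : R.eval a = 0
      · exact Finset.mem_union_left _ (by simpa [hR0] using h)
      · refine Finset.mem_union_right _ (Finset.mem_biUnion.2 ⟨P.eval a / R.eval a, ?_, ?_⟩)
        · simp only [hT, Finset.mem_insert, Finset.mem_image]
          right; right; exact ⟨a, ha, rfl⟩
        · have : (F (P.eval a / R.eval a)).eval a = 0 := by rw [hFev]; field_simp; ring
          simpa [hF0] using this
    · intro a _ ha
      refine rootMultiplicity_eq_zero fun hr => ha (by simpa [hW0] using hr)
  rw [Finset.sum_union, Finset.sum_biUnion] at htot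
  rotate_left
  · intro y _ z _ hyz
    refine Finset.disjoint_left.2 fun a h1 h2 => hyz ?_
    have h1' : (F y).eval a = 0 := by simpa [hF0] using h1
    have h2' : (F z).eval a = 0 := by simpa [hF0] using h2
    rw [← hmem y a h1', ← hmem z a h2']
  · refine Finset.disjoint_left.2 fun a h1 h2 => ?_
    obtain ⟨y, _, h2⟩ := Finset.mem_biUnion.1 h2
    have h1' : R.eval a = 0 := by simpa [hR0] using h1
    have h2' : (F y).eval a = 0 := by simpa [hF0] using h2
    exact hFR y a h2' h1'
  have hfs : ∑ᶠ y ∈ {y : ℂ | y ≠ 0 ∧ y ≠ 1}, (n - (F y).roots.toFinset.card)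
      = ∑ y ∈ (T.erase 0).erase 1, (n - (F y).roots.toFinset.card) := by
    refine finsum_mem_eq_sum_of_inter_support_eq _ ?_
    ext y
    simp only [Set.mem_inter_iff, Set.mem_setOf_eq, Function.mem_support, Finset.coe_erase,
      Set.mem_diff, Set.mem_singleton_iff, Finset.mem_coe]
    constructor
    · rintro ⟨⟨h0, h1⟩, h⟩
      exact ⟨⟨⟨by_contra fun hy => h (by simp [hout y hy]), h0⟩, h1⟩, h⟩
    · rintro ⟨⟨⟨_, h0⟩, h1⟩, h⟩
      exact ⟨⟨h0, h1⟩, h⟩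
  rw [hfs]
  have h0T : (0 : ℂ) ∈ T := by simp [hT]
  have h1T : (1 : ℂ) ∈ T.erase 0 := by simp [hT]
  rw [← Finset.add_sum_erase _ _ h0T, ← Finset.add_sum_erase _ _ h1T] at htot
  have hcong : ∑ y ∈ (T.erase 0).erase 1, (n - (F y).roots.toFinset.card)
      = ∑ y ∈ (T.erase 0).erase 1, ∑ a ∈ (F y).roots.toFinset, rootMultiplicity a W :=
    Finset.sum_congr rfl fun y _ => by have := hsF y; omega
  rw [hcong]
  have e0 := hsF 0
  have e1 := hsF 1
  have c0 : (F 0).roots.toFinset.card = P.roots.toFinset.card := by simp [hFdef]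
  have c1 : (F 1).roots.toFinset.card = Q.roots.toFinset.card := by simp [hFdef, hR]
  omega
end

section
/- Let k ≥ 1 and let A, B ∈ ℂ[X] be coprime polynomials with deg A = 2k and deg B = 3k. Then A³ ≠ B² and deg(A³ − B²) ≥ k + 1. -/
open Polynomial

/-- Davenport's 1965 bound: if `A, B ∈ ℂ[X]` are coprime with `deg A = 2k`
and `deg B = 3k` (`k ≥ 1`), then `A³ ≠ B²` and `deg (A³ - B²) ≥ k + 1`. -/
theorem stmt3 (k : ℕ) (hk : 1 ≤ k) (A B : ℂ[X])
    (hcop : IsCoprime A B)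
    (hA : A.natDegree = 2 * k) (hB : B.natDegree = 3 * k) :
    A ^ 3 ≠ B ^ 2 ∧ k + 1 ≤ (A ^ 3 - B ^ 2).natDegree := by
  have hA0 : A ≠ 0 := by rintro rfl; simp at hA; omega
  have hB0 : B ≠ 0 := by rintro rfl; simp at hB; omega
  have hne : A ^ 3 ≠ B ^ 2 := by
    intro h
    have h1 : IsCoprime (A ^ 3) (B ^ 2) := hcop.pow
    rw [← h] at h1
    have h2 : IsUnit (A ^ 3) := isCoprime_self.mp h1
    have h3 := natDegree_eq_zero_of_isUnit h2
    rw [natDegree_pow, hA] at h3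
    omega
  refine ⟨hne, ?_⟩
  have hc0 : A ^ 3 - B ^ 2 ≠ 0 := sub_ne_zero.mpr hne
  have hcop2 : IsCoprime (A ^ 3) (-(B ^ 2)) := (hcop.pow).neg_right
  have key := Polynomial.abc (a := A ^ 3) (b := -(B ^ 2)) (c := -(A ^ 3 - B ^ 2))
    (pow_ne_zero _ hA0) (neg_ne_zero.mpr (pow_ne_zero _ hB0)) (neg_ne_zero.mpr hc0)
    hcop2 (by ring)
  rcases key with ⟨h, -, -⟩ | ⟨h, -, -⟩
  · have hd : UniqueFactorizationMonoid.radical (A ^ 3 * -(B ^ 2) * -(A ^ 3 - B ^ 2))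
        ∣ A * B * (A ^ 3 - B ^ 2) := by
      refine UniqueFactorizationMonoid.radical_mul_dvd.trans (mul_dvd_mul
        (UniqueFactorizationMonoid.radical_mul_dvd.trans (mul_dvd_mul ?_ ?_)) ?_)
      · rw [UniqueFactorizationMonoid.radical_pow _ (by norm_num)]
        exact UniqueFactorizationMonoid.radical_dvd_self
      · rw [UniqueFactorizationDomain.radical_neg,
          UniqueFactorizationMonoid.radical_pow _ (by norm_num)]
        exact UniqueFactorizationMonoid.radical_dvd_self
      · rw [UniqueFactorizationDomain.radical_neg]
        exact UniqueFactorizationMonoid.radical_dvd_self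
    have hle := natDegree_le_of_dvd hd (mul_ne_zero (mul_ne_zero hA0 hB0) hc0)
    rw [natDegree_mul (mul_ne_zero hA0 hB0) hc0, natDegree_mul hA0 hB0, hA, hB] at hle
    rw [natDegree_pow, hA] at h
    omega
  · have h3 := Polynomial.derivative_eq_zero.mp h
    rw [natDegree_pow, hA] at h3
    omega
end

section
/- For every integer k ≥ 1 there exist coprime monic polynomials A, B ∈ ℂ[X] with deg A = 2k and deg B = 3k such that deg(A³ − B²) = k + 1. -/
open Polynomial

theorem order_lemma (A K F : ℂ[X]) (p q : ℕ) (l α : ℂ) (hA : A ≠ 0) (hC : K ≠ 0) (hF : F ≠ 0) (hl : l ≠ 0)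
    (h : (p : ℂ[X]) * derivative A * K - (q : ℂ[X]) * A * derivative K = C l * F) :
    rootMultiplicity α A + rootMultiplicity α K ≤ rootMultiplicity α F + 1 ∧
    (p * rootMultiplicity α A ≠ q * rootMultiplicity α K →
      rootMultiplicity α A + rootMultiplicity α K = rootMultiplicity α F + 1) := by
  obtain ⟨A1, hA1, hA2⟩ := exists_eq_pow_rootMultiplicity_mul_and_not_dvd A hA α
  obtain ⟨C1, hC1, hC2⟩ := exists_eq_pow_rootMultiplicity_mul_and_not_dvd K hC α
  set a := rootMultiplicity α A
  set n := rootMultiplicity α K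
  have key : ∀ (m : ℕ) (P : ℂ[X]), (X - C α) * derivative ((X - C α)^m * P) =
      (X - C α)^m * ((m:ℂ[X]) * P + (X - C α) * derivative P) := by
    intro m P
    rcases m with _ | m
    · simp
    · simp [derivative_mul, derivative_pow]
      ring
  set G : ℂ[X] := ((p * a : ℕ) - (q * n : ℕ) : ℂ[X]) * (A1 * C1) +
    (X - C α) * ((p:ℂ[X]) * derivative A1 * C1 - (q:ℂ[X]) * A1 * derivative C1) with hG
  have h1 : (X - C α) * (C l * F) = (X - C α)^(a+n) * G := by
    rw [← h]
    have e1 := key a A1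
    have e2 := key n C1
    rw [← hA1] at e1
    rw [← hC1] at e2
    calc _ = (p:ℂ[X]) * ((X - C α) * derivative A) * K - (q:ℂ[X]) * A * ((X - C α) * derivative K) := by ring
      _ = (p:ℂ[X]) * ((X - C α) * derivative A) * ((X - C α)^n * C1) - (q:ℂ[X]) * ((X - C α)^a * A1) * ((X - C α) * derivative K) := by rw [← hA1, ← hC1]
      _ = _ := by
        rw [e1, e2, hG]; push_cast; ring
  have hX : (X - C α) ≠ 0 := X_sub_C_ne_zero α
  have hlC : C l ≠ 0 := by simpa using hl
  have hL : (X - C α) * (C l * F) ≠ 0 := by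
    exact mul_ne_zero hX (mul_ne_zero hlC hF)
  have hm := congrArg (rootMultiplicity α) h1
  have hR := h1 ▸ hL
  rw [rootMultiplicity_mul hL, rootMultiplicity_mul (mul_ne_zero hlC hF), rootMultiplicity_mul hR,
    rootMultiplicity_X_sub_C_self, rootMultiplicity_C, rootMultiplicity_X_sub_C_pow] at hm
  refine ⟨by omega, fun hne => ?_⟩
  have : rootMultiplicity α G = 0 := by
    apply rootMultiplicity_eq_zero
    rw [dvd_iff_isRoot] at hA2 hC2
    simp only [IsRoot.def] at *
    simp only [hG, eval_add, eval_mul, eval_sub, eval_natCast, eval_X, eval_C, sub_self, zero_mul, add_zero]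
    refine mul_ne_zero ?_ (mul_ne_zero hA2 hC2)
    rw [sub_ne_zero]
    exact_mod_cast hne
  omega

theorem height_low {σ : Type} [Fintype σ] : ((Fintype.card σ : ℕ) : ℕ∞) ≤
    (MvPolynomial.vanishingIdeal ℂ {(0 : σ → ℂ)} : Ideal (MvPolynomial σ ℂ)).height := by
  classical
  let e := Fintype.equivFin σ
  let φ : ℕ → (MvPolynomial σ ℂ →ₐ[ℂ] MvPolynomial σ ℂ) := fun i =>
    MvPolynomial.aeval (fun j => if (e j : ℕ) < i then 0 else MvPolynomial.X j)
  have hprime : ∀ i, (RingHom.ker (φ i)).IsPrime := fun i => RingHom.ker_isPrime _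
  have hcomp : ∀ i p, φ (i+1) (φ i p) = φ (i+1) p := by
    intro i p
    have : (φ (i+1)).comp (φ i) = φ (i+1) := by
      apply MvPolynomial.algHom_ext
      intro j
      simp only [φ, AlgHom.comp_apply, MvPolynomial.aeval_X]
      split_ifs with h1 h2
      · simp
      · omega
      · simp [*]; omega
      · simp [*]; omega
    exact congrArg (fun g => g p) this
  have hstep : ∀ i, i < Fintype.card σ → RingHom.ker (φ i) < RingHom.ker (φ (i+1)) := by
    intro i hi
    rw [SetLike.lt_iff_le_and_exists]
    refine ⟨?_, MvPolynomial.X (e.symm ⟨i, hi⟩), ?_, ?_⟩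
    · intro p hp
      rw [RingHom.mem_ker] at hp ⊢
      rw [← hcomp, hp, map_zero]
    · rw [RingHom.mem_ker]
      simp [φ]
    · rw [RingHom.mem_ker]
      simp [φ]
  have hind : ∀ i, i ≤ Fintype.card σ → (i : ℕ∞) ≤ (RingHom.ker (φ i)).height := by
    intro i
    induction i with
    | zero => simp
    | succ i ih =>
      intro hi
      have h1 := ih (by omega)
      have := hprime i
      have h2 := Ideal.height_strict_mono_of_isPrime (hstep i (by omega))
      have h3 := Order.add_one_le_of_lt (h1.trans_lt h2)
      exact_mod_cast h3
  refine (hind _ le_rfl).trans (Ideal.height_mono ?_)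
  intro p hp
  rw [RingHom.mem_ker] at hp
  rw [MvPolynomial.mem_vanishingIdeal_singleton_iff]
  have : (MvPolynomial.aeval (0 : σ → ℂ)).comp (φ (Fintype.card σ)) = MvPolynomial.aeval (0 : σ → ℂ) := by
    apply MvPolynomial.algHom_ext
    intro j
    simp [φ]
  rw [← this, AlgHom.comp_apply, hp, map_zero]

theorem exists_zero {σ : Type} [Fintype σ] {m : ℕ} (hm : m < Fintype.card σ) (f : Fin m → MvPolynomial σ ℂ)
    (h0 : ∀ i, MvPolynomial.eval 0 (f i) = 0) : ∃ v : σ → ℂ, v ≠ 0 ∧ ∀ i, MvPolynomial.eval v (f i) = 0 := by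
  by_contra hcon
  push Not at hcon
  set I : Ideal (MvPolynomial σ ℂ) := Ideal.span (Set.range f)
  have hz : MvPolynomial.zeroLocus ℂ I = {0} := by
    rw [MvPolynomial.zeroLocus_span]
    ext v
    simp only [Set.mem_ofPred_eq, Set.forall_mem_range, Set.mem_singleton_iff]
    constructor
    · intro h
      by_contra hv
      obtain ⟨i, hi⟩ := hcon v hv
      exact hi (h i)
    · rintro rfl i
      exact h0 i
  have hr := MvPolynomial.vanishingIdeal_zeroLocus_eq_radical (K := ℂ) I
  rw [hz] at hr
  set M : Ideal (MvPolynomial σ ℂ) := MvPolynomial.vanishingIdeal ℂ {(0 : σ → ℂ)} with hMdef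
  have hMmax : M.IsMaximal := MvPolynomial.isMaximal_iff_eq_vanishingIdeal_singleton.2 ⟨0, rfl⟩
  have hmin : M ∈ I.minimalPrimes := by
    refine ⟨⟨hMmax.isPrime, ?_⟩, ?_⟩
    · rw [hr]; exact Ideal.le_radical
    · rintro q ⟨hq, hIq⟩ _
      rw [hr]
      exact hq.radical_le_iff.2 hIq
  have hh := Ideal.height_le_card_of_mem_minimalPrimes_span (s := Set.range f) (Set.finite_range f) hmin
  have hcard : (Set.range f).ncard ≤ m := by
    have := Set.ncard_image_le (f := f) (Set.finite_univ)
    simpa [Set.ncard_univ] using this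
  have hlow : ((Fintype.card σ : ℕ) : ℕ∞) ≤ M.height := height_low
  have := hlow.trans hh
  have := Nat.cast_le.1 this
  omega

noncomputable def Qp {R : Type} [CommRing R] (K E : R[X]) : R[X] :=
  E ^ 2 - 4 * (E * derivative (derivative K)) - 13 * (derivative K * derivative E)
    - 12 * (derivative (derivative K)) ^ 2
    - 12 * (derivative K * derivative (derivative (derivative K)))
    - 6 * (K * derivative (derivative E))

theorem Qp_map {R S : Type} [CommRing R] [CommRing S] (f : R →+* S) (K E : R[X]) :
    (Qp K E).map f = Qp (K.map f) (E.map f) := by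
  simp [Qp, derivative_map]

def e0 (n : ℕ) : ℕ := 12 * (n + 1) * (2 * n + 1)

noncomputable def Kof {R : Type} [CommRing R] (n : ℕ) (w : Fin (n + 1) → R) : R[X] :=
  X ^ (n + 2) + ∑ i, C (w i) * X ^ (i : ℕ)

noncomputable def Eof {R : Type} [CommRing R] (n : ℕ) (w : Fin n → R) : R[X] :=
  C ((e0 n : ℕ) : R) * X ^ n + ∑ i, C (w i) * X ^ (i : ℕ)

theorem coeff_sum_fin {R : Type} [CommRing R] (m : ℕ) (w : Fin m → R) (j : ℕ) :
    (∑ i, C (w i) * X ^ (i : ℕ) : R[X]).coeff j = if h : j < m then w ⟨j, h⟩ else 0 := by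
  simp only [finsetSum_coeff, coeff_C_mul, coeff_X_pow, mul_ite, mul_one, mul_zero]
  split_ifs with h
  · rw [Finset.sum_eq_single ⟨j, h⟩]
    · simp
    · intro b _ hb
      rw [if_neg]
      intro h'; apply hb; ext; exact h'.symm
    · simp
  · apply Finset.sum_eq_zero
    intro i _
    rw [if_neg]
    have := i.2
    omega

theorem Kof_map {R S : Type} [CommRing R] [CommRing S] (f : R →+* S) (n : ℕ) (w : Fin (n+1) → R) :
    (Kof n w).map f = Kof n (fun i => f (w i)) := by
  simp [Kof, Polynomial.map_sum]

theorem Eof_map {R S : Type} [CommRing R] [CommRing S] (f : R →+* S) (n : ℕ) (w : Fin n → R) :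
    (Eof n w).map f = Eof n (fun i => f (w i)) := by
  simp [Eof, Polynomial.map_sum]

theorem Kof_coeff (n : ℕ) (w : Fin (n+1) → ℂ) (j : ℕ) :
    (Kof n w).coeff j = (if j = n + 2 then 1 else 0) + if h : j < n + 1 then w ⟨j, h⟩ else 0 := by
  rw [Kof, coeff_add, coeff_sum_fin, coeff_X_pow]

theorem Eof_coeff (n : ℕ) (w : Fin n → ℂ) (j : ℕ) :
    (Eof n w).coeff j = (if j = n then (e0 n : ℂ) else 0) + if h : j < n then w ⟨j, h⟩ else 0 := by
  rw [Eof, coeff_add, coeff_sum_fin, coeff_C_mul, coeff_X_pow]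
  simp

/-- The trivial solution. -/
theorem Qp_triv (n : ℕ) : (X ^ (2 * n) : ℂ[X]) ∣ Qp (X ^ (n + 2)) (C (e0 n : ℂ) * X ^ n) := by
  rcases n with _ | _ | n
  · simp
  · refine ⟨C (-(12 * 36 * 3 : ℂ)) + C ((e0 1 : ℂ) ^ 2 - 4 * 6 * e0 1 - 13 * 3 * e0 1 - 12 * 36 - 12 * 18 + 12 * 36 * 3), ?_⟩
    simp [Qp, derivative_X_pow, derivative_mul]
    ring_nf
    simp only [← C_mul, ← C_pow, C_ofNat]
    try ring
  · simp only [Qp, derivative_X_pow, derivative_mul, derivative_C, derivative_natCast, zero_mul, zero_add, Nat.add_sub_cancel, map_natCast,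
      show n + 1 + 1 + 2 - 1 = n + 3 by omega, show n + 3 - 1 = n + 2 by omega, show n + 2 - 1 = n + 1 by omega]
    refine ⟨(e0 (n+1+1) : ℂ[X]) ^ 2 - 4 * (e0 (n+1+1) * ((n+1+1+2 : ℕ) * (n+3 : ℕ)))
      - 13 * ((n+1+1+2 : ℕ) * (e0 (n+1+1) * (n+1+1 : ℕ))) - 12 * ((n+1+1+2 : ℕ) * (n+3 : ℕ))^2
      - 12 * ((n+1+1+2 : ℕ) * ((n+1+1+2 : ℕ) * ((n+3 : ℕ) * (n+2 : ℕ))))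
      - 6 * (e0 (n+1+1) * ((n+1+1 : ℕ) * (n+1 : ℕ))), ?_⟩
    push_cast
    ring

theorem Qp_top (n : ℕ) (K E : ℂ[X]) (hK : K.natDegree ≤ n + 2) (hK1 : K.coeff (n+2) = 1)
    (hE : E.natDegree ≤ n) (hE1 : E.coeff n = e0 n) (h : ∀ j < 2 * n, (Qp K E).coeff j = 0) :
    Qp K E = 0 := by
  have hd : ∀ (p : ℂ[X]) (m : ℕ), p.natDegree ≤ m + 1 → (derivative p).natDegree ≤ m := by
    intro p m hp
    exact (natDegree_derivative_le p).trans (by omega)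
  have hd0 : ∀ (p : ℂ[X]), p.natDegree ≤ 0 → derivative p = 0 := by
    intro p hp
    exact derivative_of_natDegree_zero (by omega)
  have n4 : (4 : ℂ[X]) = C 4 := rfl
  have n13 : (13 : ℂ[X]) = C 13 := rfl
  have n12 : (12 : ℂ[X]) = C 12 := rfl
  have n6 : (6 : ℂ[X]) = C 6 := rfl
  have hc : ∀ (c : ℂ) (p q : ℂ[X]) (a b m : ℕ), p.natDegree ≤ a → q.natDegree ≤ b → a + b = m →
      (C c * (p * q)).natDegree ≤ m ∧ (C c * (p * q)).coeff m = c * (p.coeff a * q.coeff b) := by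
    intro c p q a b m hp hq hm
    subst hm
    refine ⟨(natDegree_C_mul_le _ _).trans (natDegree_mul_le_of_le hp hq), ?_⟩
    rw [coeff_C_mul, coeff_mul_add_eq_of_natDegree_le hp hq]
  have hK' := hd K (n+1) hK
  have hK'' := hd _ n hK'
  suffices hh : (Qp K E).natDegree ≤ 2 * n ∧ (Qp K E).coeff (2 * n) = 0 by
    ext j
    rcases lt_trichotomy j (2*n) with hj | hj | hj
    · simpa using h j hj
    · rw [hj]; simpa using hh.2
    · rw [coeff_eq_zero_of_natDegree_lt (by omega)]; simp
  have t1 := hc 1 E E n n (2*n) hE hE (by omega)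
  have t2 := hc 4 _ _ n n (2*n) hE hK'' (by omega)
  have t4 := hc 12 _ _ n n (2*n) hK'' hK'' (by omega)
  have t3 : (C 13 * (derivative K * derivative E)).natDegree ≤ 2 * n ∧
      (C 13 * (derivative K * derivative E)).coeff (2*n) = (13:ℂ) * (((n:ℂ)+2) * (n:ℂ) * (e0 n:ℂ)) := by
    rcases n with _ | n
    · simp [hd0 E hE]
    · have := hc 13 _ _ (n+2) n (2*(n+1)) hK' (hd _ _ hE) (by omega)
      refine ⟨this.1, this.2.trans ?_⟩
      simp [coeff_derivative, hE1, hK1]; ring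
  have t5 : (C 12 * (derivative K * derivative (derivative (derivative K)))).natDegree ≤ 2 * n ∧
      (C 12 * (derivative K * derivative (derivative (derivative K)))).coeff (2*n)
        = (12:ℂ) * (((n:ℂ)+2) * ((n:ℂ)+2) * ((n:ℂ)+1) * (n:ℂ)) := by
    rcases n with _ | n
    · simp [hd0 _ hK'']
    · have := hc 12 _ _ (n+2) n (2*(n+1)) hK' (hd _ _ hK'') (by omega)
      refine ⟨this.1, this.2.trans ?_⟩
      simp [coeff_derivative, hK1]; ring
  have t6 : (C 6 * (K * derivative (derivative E))).natDegree ≤ 2 * n ∧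
      (C 6 * (K * derivative (derivative E))).coeff (2*n) = (6:ℂ) * ((n:ℂ) * ((n:ℂ) - 1) * (e0 n:ℂ)) := by
    rcases n with _ | _ | n
    · simp [hd0 E hE]
    · simp [hd0 _ (hd _ _ hE)]
    · have := hc 6 _ _ (n+4) n (2*(n+1+1)) hK (hd _ _ (hd _ _ hE)) (by omega)
      refine ⟨this.1, this.2.trans ?_⟩
      simp [coeff_derivative, hE1, hK1]; ring
  have hQ : Qp K E = C 1 * (E * E) - C 4 * (E * derivative (derivative K)) - C 13 * (derivative K * derivative E)
    - C 12 * (derivative (derivative K) * derivative (derivative K))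
    - C 12 * (derivative K * derivative (derivative (derivative K)))
    - C 6 * (K * derivative (derivative E)) := by
    rw [Qp, n4, n13, n12, n6, C_1]; ring
  have hs : ∀ p q : ℂ[X], p.natDegree ≤ 2 * n → q.natDegree ≤ 2 * n → (p - q).natDegree ≤ 2 * n :=
    fun p q hp hq => (natDegree_sub_le p q).trans (max_le hp hq)
  rw [hQ]
  constructor
  · exact hs _ _ (hs _ _ (hs _ _ (hs _ _ (hs _ _ t1.1 t2.1) t3.1) t4.1) t5.1) t6.1
  · simp only [coeff_sub]
    rw [t1.2, t2.2, t3.2, t4.2, t5.2, t6.2]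
    simp only [coeff_derivative, hE1, hK1, e0]
    push_cast
    ring

theorem wronsk (n : ℕ) (K F : ℂ[X]) (hK : K.natDegree ≤ n + 2) (hK1 : K.coeff (n+2) = 1)
    (h : derivative F * K = F * derivative K) : ∃ c, F = C c * K := by
  have hK' : (derivative K).natDegree ≤ n + 1 := (natDegree_derivative_le K).trans (by omega)
  have key : ∀ G : ℂ[X], derivative G * K = G * derivative K → G ≠ 0 → G.natDegree = n + 2 := by
    intro G hG hG0
    have hlc : G.coeff G.natDegree ≠ 0 := by simpa using hG0
    rcases hd : G.natDegree with _ | d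
    · rw [derivative_of_natDegree_zero hd, zero_mul] at hG
      have h2 := congrArg (fun p => p.coeff (0 + (n+1))) hG
      rw [coeff_mul_add_eq_of_natDegree_le hd.le hK', coeff_derivative, hK1, ← hd] at h2
      simp only [coeff_zero] at h2
      have h3 : ((n+1:ℕ):ℂ) + 1 ≠ 0 := Nat.cast_add_one_ne_zero (n+1)
      rw [one_mul] at h2
      exact absurd h2.symm (mul_ne_zero hlc h3)
    · have hG' : (derivative G).natDegree ≤ d := (natDegree_derivative_le G).trans (by omega)
      have h2 := congrArg (fun p => p.coeff (d + 1 + (n+1))) hG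
      rw [coeff_mul_add_eq_of_natDegree_le hd.le hK', show d + 1 + (n+1) = d + (n+2) by ring,
        coeff_mul_add_eq_of_natDegree_le hG' hK, coeff_derivative, coeff_derivative, hK1] at h2
      rw [hd] at hlc
      rw [mul_one, one_mul] at h2
      have h3 := mul_left_cancel₀ hlc h2
      have : d + 1 = n + 1 + 1 := by exact_mod_cast h3
      omega
  refine ⟨F.coeff (n+2), ?_⟩
  by_contra hne
  have hne' := sub_ne_zero.2 hne
  have h1 := key (F - C (F.coeff (n+2)) * K) (by simp; linear_combination h) hne'
  have h2 : (F - C (F.coeff (n+2)) * K).coeff (n+2) = 0 := by simp [hK1]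
  exact hne' (leadingCoeff_eq_zero.1 (by rw [leadingCoeff, h1]; exact h2))

theorem core (n : ℕ) (K E : ℂ[X]) (hK : K.natDegree ≤ n + 2) (hK1 : K.coeff (n+2) = 1)
    (hK2 : K.coeff (n+1) = 0)
    (hE : E.natDegree ≤ n) (hE1 : E.coeff n = e0 n) (hQ : Qp K E = 0)
    (hnt : ¬ (K = X ^ (n+2) ∧ E = C (e0 n : ℂ) * X ^ n)) :
    ∃ A B : ℂ[X], A.Monic ∧ B.Monic ∧ IsCoprime A B ∧
      A.natDegree = 2 * (n+1) ∧ B.natDegree = 3 * (n+1) ∧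
      (A ^ 3 - B ^ 2).natDegree = n + 1 + 1 := by
  have hKm : K.Monic := monic_of_natDegree_le_of_coeff_eq_one _ hK hK1
  have hKd : K.natDegree = n + 2 := le_antisymm hK (le_natDegree_of_ne_zero (by simp [hK1]))
  have hK' : (derivative K).natDegree ≤ n + 1 := (natDegree_derivative_le K).trans (by omega)
  have hK0 : K ≠ 0 := hKm.ne_zero
  set l : ℂ := 5 * n + 4 with hl
  have hl0 : l ≠ 0 := by
    have : ((5 * n + 4 : ℕ) : ℂ) ≠ 0 := by exact Nat.cast_ne_zero.2 (by omega)
    simpa [hl] using this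
  set P : ℂ[X] := derivative K ^ 2 + K * E with hP
  set A : ℂ[X] := C (l⁻¹ ^ 2) * P with hA
  set B : ℂ[X] := C l⁻¹ * (3 * derivative A * K - A * derivative K) with hB
  have hCl : C l * C l⁻¹ = 1 := by rw [← C_mul, mul_inv_cancel₀ hl0, C_1]
  have hPA : P = C l ^ 2 * A := by
    rw [hA, C_pow, ← mul_assoc, ← mul_pow, hCl]; ring
  have e1 : 3 * derivative A * K - A * derivative K = C l * B := by
    rw [hB, ← mul_assoc, hCl, one_mul]
  have hdP : derivative P = C l ^ 2 * derivative A := by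
    rw [hPA, ← C_pow, derivative_C_mul]
  have hddP : derivative (derivative P) = C l ^ 2 * derivative (derivative A) := by
    rw [hdP, ← C_pow, derivative_C_mul]
  have hde1 : 3 * derivative (derivative A) * K + 2 * derivative A * derivative K
      - A * derivative (derivative K) = C l * derivative B := by
    have := congrArg derivative e1
    simp only [derivative_sub, derivative_mul, derivative_ofNat, derivative_C] at this
    linear_combination this
  have hA2 : C l ^ 2 * (6 * derivative (derivative A) * K + derivative A * derivative K - 2 * A * derivative (derivative K)) = P * E := by
    have h1 : 6 * derivative (derivative P) * K + derivative P * derivative K - 2 * P * derivative (derivative K) = P * E - K * Qp K E := by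
      rw [hP, Qp]
      simp only [derivative_add, derivative_mul, derivative_pow, Nat.cast_ofNat, map_ofNat, derivative_ofNat]
      simp
      ring
    rw [hQ, mul_zero, sub_zero, hddP, hdP] at h1
    linear_combination h1 + 2 * derivative (derivative K) * hPA
  have hlne : (C l : ℂ[X]) ≠ 0 := by simpa using hl0
  have e2 : 2 * derivative B * K - B * derivative K = C l * A ^ 2 := by
    apply mul_left_cancel₀ (pow_ne_zero 3 hlne)
    have hP' : derivative K ^ 2 + K * E = C l ^ 2 * A := hPA
    rw [hPA] at hA2
    linear_combination (-2 * C l ^ 2 * K) * hde1 + C l ^ 2 * derivative K * e1 + K * hA2 + C l ^ 2 * A * hP'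
  -- degrees
  have hPd : P.natDegree ≤ 2 * (n+1) ∧ P.coeff (2 * (n+1)) = l ^ 2 := by
    constructor
    · refine (natDegree_add_le _ _).trans (max_le ?_ ?_)
      · exact (natDegree_pow_le_of_le 2 hK').trans (by omega)
      · exact (natDegree_mul_le_of_le hK hE).trans (by omega)
    · rw [hP, coeff_add, pow_two, show 2 * (n+1) = (n+1) + (n+1) by ring,
        coeff_mul_add_eq_of_natDegree_le hK' hK', show (n+1) + (n+1) = (n+2)+n by ring,
        coeff_mul_add_eq_of_natDegree_le hK hE, coeff_derivative, hK1, hE1, hl, e0]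
      push_cast
      ring
  have hAd : A.natDegree ≤ 2 * (n+1) := (natDegree_C_mul_le _ _).trans hPd.1
  have hA1 : A.coeff (2*(n+1)) = 1 := by
    rw [hA, coeff_C_mul, hPd.2, ← mul_pow, inv_mul_cancel₀ hl0, one_pow]
  have hA' : (derivative A).natDegree ≤ 2*n+1 := (natDegree_derivative_le A).trans (by omega)
  have h3A' : (3 * derivative A).natDegree ≤ 2*n+1 := by
    rw [show (3:ℂ[X]) = C 3 from rfl]
    exact (natDegree_C_mul_le _ _).trans hA'
  have hBd : B.natDegree ≤ 3 * (n+1) := by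
    refine (natDegree_C_mul_le _ _).trans ((natDegree_sub_le _ _).trans (max_le ?_ ?_))
    · exact (natDegree_mul_le_of_le h3A' hK).trans (by omega)
    · exact (natDegree_mul_le_of_le hAd hK').trans (by omega)
  have hB1 : B.coeff (3 * (n+1)) = 1 := by
    rw [hB, coeff_C_mul, coeff_sub, show 3 * (n+1) = 2*(n+1) + (n+1) by ring,
      coeff_mul_add_eq_of_natDegree_le hAd hK', show 2*(n+1) + (n+1) = (2*n+1) + (n+2) by ring,
      coeff_mul_add_eq_of_natDegree_le h3A' hK, show (3:ℂ[X]) = C 3 from rfl, coeff_C_mul,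
      coeff_derivative, coeff_derivative, hK1, show 2*n+1+1 = 2*(n+1) by ring, hA1]
    have : l⁻¹ * l = 1 := inv_mul_cancel₀ hl0
    refine Eq.trans (congrArg (l⁻¹ * ·) ?_) this
    rw [hl]
    push_cast
    ring
  have hAm : A.Monic := monic_of_natDegree_le_of_coeff_eq_one _ hAd hA1
  have hBm : B.Monic := monic_of_natDegree_le_of_coeff_eq_one _ hBd hB1
  have hAd' : A.natDegree = 2 * (n+1) := le_antisymm hAd (le_natDegree_of_ne_zero (by simp [hA1]))
  have hBd' : B.natDegree = 3 * (n+1) := le_antisymm hBd (le_natDegree_of_ne_zero (by simp [hB1]))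
  have hA0 := hAm.ne_zero
  have hB0 := hBm.ne_zero
  obtain ⟨c, hc⟩ := wronsk n K (A^3 - B^2) hK hK1 (by
    simp only [derivative_sub, derivative_pow, Nat.cast_ofNat, map_ofNat]
    norm_num
    linear_combination A^2 * e1 - B * e2)
  have o1 : ∀ α, _ := fun α => order_lemma A K B 3 1 l α hA0 hK0 hB0 hl0 (by
    push_cast; rw [one_mul]; exact e1)
  have o2 : ∀ α, _ := fun α => order_lemma B K (A^2) 2 1 l α hB0 hK0 (pow_ne_zero 2 hA0) hl0 (by
    push_cast; rw [one_mul]; exact e2)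
  by_cases hc0 : c = 0
  · exfalso
    rw [hc0, C_0, zero_mul, sub_eq_zero] at hc
    have hmul : ∀ α ∈ A.roots.toFinset, 2 * rootMultiplicity α K = rootMultiplicity α A + 2 := by
      intro α hα
      have ha : 0 < rootMultiplicity α A := by
        rw [rootMultiplicity_pos hA0]
        simpa [hA0] using hα
      have h1 := congrArg (rootMultiplicity α) hc
      rw [← count_roots, ← count_roots, roots_pow, roots_pow, Multiset.count_nsmul,
        Multiset.count_nsmul, count_roots, count_roots] at h1
      have h2 := o1 α
      by_cases h3 : 3 * rootMultiplicity α A = 1 * rootMultiplicity α K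
      · have := h2.1
        omega
      · have := h2.2 h3
        omega
    have hcA : ∑ α ∈ A.roots.toFinset, rootMultiplicity α A = 2 * (n+1) := by
      rw [← hAd', ← splits_iff_card_roots.1 (IsAlgClosed.splits A),
        ← Multiset.toFinset_sum_count_eq]
      exact Finset.sum_congr rfl fun α _ => (count_roots A).symm
    have hcK : ∑ α ∈ A.roots.toFinset, rootMultiplicity α K ≤ n + 2 := by
      calc _ ≤ ∑ α ∈ A.roots.toFinset ∪ K.roots.toFinset, rootMultiplicity α K :=
            Finset.sum_le_sum_of_subset Finset.subset_union_left
        _ = ∑ α ∈ A.roots.toFinset ∪ K.roots.toFinset, K.roots.count α :=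
            Finset.sum_congr rfl fun α _ => (count_roots K).symm
        _ = K.roots.card := Multiset.sum_count_eq_card (by
            intro a ha; simp only [Finset.mem_union, Multiset.mem_toFinset]; exact Or.inr ha)
        _ ≤ n + 2 := hKd ▸ card_roots' K
    have hsum := Finset.sum_congr rfl hmul
    rw [← Finset.mul_sum, Finset.sum_add_distrib, hcA, Finset.sum_const, smul_eq_mul] at hsum
    have hcard1 : A.roots.toFinset.card ≤ 1 := by omega
    have hcard0 : A.roots.toFinset.card ≠ 0 := by
      intro h0
      rw [Finset.card_eq_zero] at h0
      rw [h0] at hcA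
      simp at hcA
    obtain ⟨α, hα⟩ := Finset.card_eq_one.1 (show A.roots.toFinset.card = 1 by omega)
    have hmα := hmul α (by rw [hα]; simp)
    rw [hα, Finset.sum_singleton] at hcA
    have pw : ∀ (p : ℂ[X]) (m : ℕ), p.Monic → p.natDegree = m → rootMultiplicity α p = m →
        p = (X - C α) ^ m := by
      intro p m hp hpd hr
      have hdv := pow_rootMultiplicity_dvd p α
      rw [hr] at hdv
      refine eq_of_monic_of_dvd_of_natDegree_le ((monic_X_sub_C α).pow m) hp hdv ?_
      rw [natDegree_pow, natDegree_X_sub_C, hpd, mul_one]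
    have hAe := pw A _ hAm hAd' hcA
    have hKe := pw K (n+2) hKm hKd (by omega)
    have hα0 : α = 0 := by
      have h1 : K.nextCoeff = 0 := by
        rw [nextCoeff_of_natDegree_pos (by omega), hKd]; exact hK2
      rw [hKe, (monic_X_sub_C α).nextCoeff_pow, nextCoeff_X_sub_C] at h1
      have h2 : ((n + 2 : ℕ) : ℂ) ≠ 0 := Nat.cast_ne_zero.2 (by omega)
      push_cast at h2
      simpa [h2] using h1
    rw [hα0, C_0, sub_zero] at hAe hKe
    refine hnt ⟨hKe, ?_⟩
    apply mul_left_cancel₀ hK0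
    have h1 : derivative K ^ 2 + K * E = C l ^ 2 * A := hPA
    have hdK : derivative K = (n + 2 : ℂ[X]) * X ^ (n+1) := by
      rw [hKe, derivative_X_pow, show n + 2 - 1 = n + 1 by omega]
      simp only [Nat.cast_add, Nat.cast_ofNat, map_add, map_natCast, map_ofNat]
    rw [hdK, hAe] at h1
    have h2 : K * E = C l ^ 2 * X ^ (2 * (n+1)) - ((n + 2 : ℂ[X]) * X ^ (n+1))^2 := by
      linear_combination h1
    rw [h2, hKe, hl, e0]
    simp only [Nat.cast_add, Nat.cast_mul, Nat.cast_one, Nat.cast_ofNat, map_add, map_mul, map_natCast, map_ofNat, map_one]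
    ring
  · refine ⟨A, B, hAm, hBm, ?_, hAd', hBd', ?_⟩
    · refine (isCoprime_iff_aeval_ne_zero_of_isAlgClosed (k := ℂ) ℂ A B).2 ?_
      intro α
      by_contra hcon
      push Not at hcon
      simp only [coe_aeval_eq_eval] at hcon
      have ha : 0 < rootMultiplicity α A := (rootMultiplicity_pos hA0).2 hcon.1
      have hb : 0 < rootMultiplicity α B := (rootMultiplicity_pos hB0).2 hcon.2
      have h1 := (o1 α).1
      have h2 := (o2 α).1
      rw [← count_roots (A^2), roots_pow, Multiset.count_nsmul, count_roots] at h2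
      have hcc : C c ≠ 0 := by simpa using hc0
      have hne : C c * K ≠ 0 := mul_ne_zero hcc hK0
      have h3 : min (3 * rootMultiplicity α A) (2 * rootMultiplicity α B) ≤ rootMultiplicity α K := by
        have h4 : rootMultiplicity α (C c * K) = rootMultiplicity α K := by
          rw [rootMultiplicity_mul hne, rootMultiplicity_C, zero_add]
        rw [← h4, le_rootMultiplicity_iff hne, ← hc]
        apply dvd_sub
        · refine (pow_dvd_pow _ (min_le_left _ _)).trans ?_
          rw [mul_comm, pow_mul]
          exact pow_dvd_pow_of_dvd (pow_rootMultiplicity_dvd A α) 3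
        · refine (pow_dvd_pow _ (min_le_right _ _)).trans ?_
          rw [mul_comm, pow_mul]
          exact pow_dvd_pow_of_dvd (pow_rootMultiplicity_dvd B α) 2
      omega
    · rw [hc, natDegree_C_mul hc0, hKd]

/-- Stothers's 1981 theorem: Davenport's bound `deg (A³ - B²) ≥ k + 1` is
attained for every `k ≥ 1`. -/
theorem stmt4 (k : ℕ) (hk : 1 ≤ k) :
    ∃ A B : ℂ[X], A.Monic ∧ B.Monic ∧ IsCoprime A B ∧
      A.natDegree = 2 * k ∧ B.natDegree = 3 * k ∧
      (A ^ 3 - B ^ 2).natDegree = k + 1 := by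
  obtain ⟨n, rfl⟩ : ∃ n, k = n + 1 := ⟨k - 1, by omega⟩
  let Kg : (MvPolynomial (Fin (n+1) ⊕ Fin n) ℂ)[X] := Kof n (fun i => MvPolynomial.X (Sum.inl i))
  let Eg : (MvPolynomial (Fin (n+1) ⊕ Fin n) ℂ)[X] := Eof n (fun i => MvPolynomial.X (Sum.inr i))
  have hev : ∀ (v : Fin (n+1) ⊕ Fin n → ℂ) (j : ℕ), MvPolynomial.eval v ((Qp Kg Eg).coeff j) =
      (Qp (Kof n (fun i => v (Sum.inl i))) (Eof n (fun i => v (Sum.inr i)))).coeff j := by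
    intro v j
    rw [← coeff_map, Qp_map, Kof_map, Eof_map]
    simp
  obtain ⟨v, hv0, hv⟩ := exists_zero (σ := Fin (n+1) ⊕ Fin n) (m := 2 * n) (by simp; omega)
    (fun j => (Qp Kg Eg).coeff j) (by
      intro j
      rw [hev]
      have h := X_pow_dvd_iff.1 (Qp_triv n) j j.2
      convert! h using 3 <;> simp [Kof, Eof])
  set w : Fin (n+1) → ℂ := fun i => v (Sum.inl i) with hw
  set u : Fin n → ℂ := fun i => v (Sum.inr i) with hu
  have hK : (Kof n w).natDegree ≤ n + 2 := by
    rw [natDegree_le_iff_coeff_eq_zero]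
    intro N hN
    rw [Kof_coeff, if_neg (by omega), dif_neg (by omega), add_zero]
  have hE : (Eof n u).natDegree ≤ n := by
    rw [natDegree_le_iff_coeff_eq_zero]
    intro N hN
    rw [Eof_coeff, if_neg (by omega), dif_neg (by omega), add_zero]
  have hK1 : (Kof n w).coeff (n+2) = 1 := by rw [Kof_coeff]; simp
  have hK2 : (Kof n w).coeff (n+1) = 0 := by rw [Kof_coeff]; simp
  have hE1 : (Eof n u).coeff n = e0 n := by rw [Eof_coeff]; simp
  have hQ : Qp (Kof n w) (Eof n u) = 0 := by
    apply Qp_top n _ _ hK hK1 hE hE1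
    intro j hj
    have := hv ⟨j, hj⟩
    rwa [hev] at this
  refine core n _ _ hK hK1 hK2 hE hE1 hQ ?_
  rintro ⟨h1, h2⟩
  apply hv0
  funext i
  rcases i with i | i
  · have h3 := congrArg (fun p => p.coeff (i : ℕ)) h1
    have := i.2
    simp only [Kof_coeff, coeff_X_pow] at h3
    rw [if_neg (by omega), dif_pos i.2, zero_add] at h3
    exact h3
  · have h3 := congrArg (fun p => p.coeff (i : ℕ)) h2
    have := i.2
    simp only [Eof_coeff, coeff_C_mul, coeff_X_pow] at h3
    rw [if_neg (by omega), dif_pos i.2, zero_add, if_neg (by omega), mul_zero] at h3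
    exact h3
end

section
/- Let n ≥ 1 and let α = (α_1, …, α_p) and β = (β_1, …, β_q) be partitions of n with p and q parts respectively, and let d = gcd(α, β) (so d divides n). Suppose p + q > n/d + 1. Then for every pair of coprime polynomials P, Q ∈ ℂ[X] with factorization patterns α and β respectively, one has P ≠ Q and deg(P − Q) ≥ (d − 1)·n/d. -/
open Polynomial

/-- Zannier's weak bound: if `p + q > n/d + 1`, then any coprime `P, Q` with
factorization patterns `α, β` satisfy `P ≠ Q` and
`deg (P - Q) ≥ (d - 1)·n/d`. -/
theorem stmt6 (n p q d : ℕ) (hn : 1 ≤ n)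
    (α : Fin p → ℕ) (β : Fin q → ℕ)
    (hα : ∀ i, 0 < α i) (hβ : ∀ j, 0 < β j)
    (hαsum : ∑ i, α i = n) (hβsum : ∑ j, β j = n)
    (hd : d = Nat.gcd (Finset.univ.gcd α) (Finset.univ.gcd β))
    (hpq : n / d + 1 < p + q)
    (P Q : ℂ[X]) (c c' : ℂ) (hc : c ≠ 0) (hc' : c' ≠ 0)
    (a : Fin p → ℂ) (b : Fin q → ℂ)
    (ha : Function.Injective a) (hb : Function.Injective b)
    (hPdef : P = C c * ∏ i, (X - C (a i)) ^ α i)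
    (hQdef : Q = C c' * ∏ j, (X - C (b j)) ^ β j)
    (hcop : IsCoprime P Q) :
    P ≠ Q ∧ (d - 1) * (n / d) ≤ (P - Q).natDegree := by
  have hdα : ∀ i, d ∣ α i := fun i => hd ▸
    (Nat.gcd_dvd_left _ _).trans (Finset.gcd_dvd (Finset.mem_univ i))
  have hdβ : ∀ j, d ∣ β j := fun j => hd ▸
    (Nat.gcd_dvd_right _ _).trans (Finset.gcd_dvd (Finset.mem_univ j))
  choose α' hα' using hdα
  choose β' hβ' using hdβ
  obtain ⟨f, hf⟩ : ∃ f : ℂ[X], f = ∏ i, (X - C (a i)) ^ α' i := ⟨_, rfl⟩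
  obtain ⟨g, hg⟩ : ∃ g : ℂ[X], g = ∏ j, (X - C (b j)) ^ β' j := ⟨_, rfl⟩
  have hPf : P = C c * f ^ d := by
    rw [hPdef, hf, ← Finset.prod_pow]
    congr 1
    exact Finset.prod_congr rfl fun i _ => by rw [← pow_mul, mul_comm, ← hα']
  have hQg : Q = C c' * g ^ d := by
    rw [hQdef, hg, ← Finset.prod_pow]
    congr 1
    exact Finset.prod_congr rfl fun i _ => by rw [← pow_mul, mul_comm, ← hβ']
  have hfm : f.Monic := by
    rw [hf]; exact monic_prod_of_monic _ _ fun i _ => (monic_X_sub_C _).pow _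
  have hgm : g.Monic := by
    rw [hg]; exact monic_prod_of_monic _ _ fun i _ => (monic_X_sub_C _).pow _
  have hfdeg : f.natDegree = ∑ i, α' i := by
    rw [hf, natDegree_prod_of_monic _ _ fun i _ => (monic_X_sub_C _).pow _]
    exact Finset.sum_congr rfl fun i _ => by
      rw [natDegree_pow, natDegree_X_sub_C, mul_one]
  have hgdeg : g.natDegree = ∑ j, β' j := by
    rw [hg, natDegree_prod_of_monic _ _ fun i _ => (monic_X_sub_C _).pow _]
    exact Finset.sum_congr rfl fun i _ => by
      rw [natDegree_pow, natDegree_X_sub_C, mul_one]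
  have hnf : n = d * f.natDegree := by
    rw [hfdeg, Finset.mul_sum, ← hαsum]
    exact Finset.sum_congr rfl fun i _ => hα' i
  have hng : n = d * g.natDegree := by
    rw [hgdeg, Finset.mul_sum, ← hβsum]
    exact Finset.sum_congr rfl fun i _ => hβ' i
  have hd0 : 0 < d := by
    rcases Nat.eq_zero_or_pos d with h | h
    · rw [h] at hnf; omega
    · exact h
  obtain ⟨m, hm⟩ : ∃ m, m = n / d := ⟨_, rfl⟩
  have hfm' : f.natDegree = m := by
    rw [hm, hnf, Nat.mul_div_cancel_left _ hd0]
  have hgm' : g.natDegree = m := by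
    rw [hm, hng, Nat.mul_div_cancel_left _ hd0]
  have hPdeg : P.natDegree = n := by
    rw [hPf, natDegree_C_mul hc, natDegree_pow, ← hnf]
  have hne : P ≠ Q := by
    intro h
    rw [← h, isCoprime_self] at hcop
    have := natDegree_eq_zero_of_isUnit hcop
    omega
  refine ⟨hne, ?_⟩
  rw [← hm]
  by_cases hcc : c = c'
  · have hfac : P - Q = (∑ i ∈ Finset.range d, f ^ i * g ^ (d - 1 - i)) * (C c * (f - g)) := by
      rw [hPf, hQg, ← hcc, ← mul_sub, ← (Commute.all f g).geom_sum₂_mul d]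
      ring
    have hco : (∑ i ∈ Finset.range d, f ^ i * g ^ (d - 1 - i)).coeff ((d - 1) * m) = d := by
      rw [finset_sum_coeff]
      rw [Finset.sum_congr rfl (g := fun _ => (1 : ℂ))]
      · simp
      · intro i hi
        have hi' := Finset.mem_range.1 hi
        have h1 : (f ^ i * g ^ (d - 1 - i)).Monic := (hfm.pow i).mul (hgm.pow _)
        have h2 : (f ^ i * g ^ (d - 1 - i)).natDegree = (d - 1) * m := by
          rw [(hfm.pow i).natDegree_mul (hgm.pow _), natDegree_pow, natDegree_pow, hfm', hgm',
            ← add_mul]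
          congr 1
          omega
        rw [← h2]
        exact h1.coeff_natDegree
    have hle := le_natDegree_of_ne_zero (hco ▸ Nat.cast_ne_zero.2 hd0.ne' :
      (∑ i ∈ Finset.range d, f ^ i * g ^ (d - 1 - i)).coeff ((d - 1) * m) ≠ 0)
    have h0 : P - Q ≠ 0 := sub_ne_zero.2 hne
    rw [hfac] at h0 ⊢
    rw [natDegree_mul (left_ne_zero_of_mul h0) (right_ne_zero_of_mul h0)]
    omega
  · have h1 : (f ^ d).coeff n = 1 := by
      have := (hfm.pow d).coeff_natDegree
      rwa [natDegree_pow, ← hnf] at this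
    have h2 : (g ^ d).coeff n = 1 := by
      have := (hgm.pow d).coeff_natDegree
      rwa [natDegree_pow, ← hng] at this
    have h3 : (P - Q).coeff n ≠ 0 := by
      rw [coeff_sub, hPf, hQg, coeff_C_mul, coeff_C_mul, h1, h2, mul_one, mul_one]
      exact sub_ne_zero.2 hcc
    refine le_trans ?_ (le_natDegree_of_ne_zero h3)
    rw [hnf, hfm']
    exact Nat.mul_le_mul_right _ (Nat.sub_le _ _)
end

section
/- Let n ≥ 1 and let α = (α_1, …, α_p) and β = (β_1, …, β_q) be partitions of n with p and q parts respectively, and let d = gcd(α, β) (so d divides n). Suppose p + q > n/d + 1. Then there exist coprime monic polynomials P, Q ∈ ℂ[X] with factorization patterns α and β respectively such that deg(P − Q) = (d − 1)·n/d. -/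
open Polynomial

namespace ZB

section dim

variable {σ : Type} [Fintype σ] [DecidableEq σ]

noncomputable def kil (S : Finset σ) : MvPolynomial σ ℂ →ₐ[ℂ] MvPolynomial σ ℂ :=
  MvPolynomial.aeval (fun i => if i ∈ S then 0 else MvPolynomial.X i)

lemma kil_height (S : Finset σ) : (S.card : ℕ∞) ≤ (RingHom.ker (kil S)).height := by
  induction S using Finset.induction_on with
  | empty => simp
  | insert s S hs ih =>
    have h1 : RingHom.ker (kil S) < RingHom.ker (kil (insert s S)) := by
      rw [SetLike.lt_iff_le_and_exists]
      refine ⟨?_, MvPolynomial.X s, ?_, ?_⟩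
      · have hc : (kil (insert s S)) = (kil (insert s S)).comp (kil S) := by
          apply MvPolynomial.algHom_ext
          intro i
          by_cases h : i ∈ S <;> simp [kil, h]
        intro x hx
        rw [RingHom.mem_ker] at hx ⊢
        rw [hc, AlgHom.comp_apply, hx, map_zero]
      · simp [RingHom.mem_ker, kil]
      · simp [RingHom.mem_ker, kil, hs]
    have hp1 : (RingHom.ker (kil S)).IsPrime := RingHom.ker_isPrime _
    have hp2 : (RingHom.ker (kil (insert s S))).IsPrime := RingHom.ker_isPrime _
    have h2 := Ideal.height_strict_mono_of_isPrime_of_isPrime h1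
    rw [Finset.card_insert_of_notMem hs]
    push_cast
    exact (add_le_add_left ih 1).trans (Order.add_one_le_of_lt h2)

lemma exists_nonzero {ι : Type} [Fintype ι] (F : ι → MvPolynomial σ ℂ)
    (h0 : ∀ i, MvPolynomial.eval 0 (F i) = 0) (hc : Fintype.card ι < Fintype.card σ) :
    ∃ x : σ → ℂ, x ≠ 0 ∧ ∀ i, MvPolynomial.eval x (F i) = 0 := by
  classical
  by_contra hcon
  push Not at hcon
  have hk : ∀ f : MvPolynomial σ ℂ, f ∈ RingHom.ker (kil (Finset.univ : Finset σ)) ↔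
      MvPolynomial.eval 0 f = 0 := by
    intro f
    have : kil (Finset.univ : Finset σ) f = MvPolynomial.C (MvPolynomial.eval 0 f) := by
      induction f using MvPolynomial.induction_on with
      | C a => simp [kil]
      | add p q hp hq => simp [hp, hq]
      | mul_X p i hp => simp [hp, kil]
    rw [RingHom.mem_ker, this]
    simp
  have hp2 : (RingHom.ker (kil (Finset.univ : Finset σ))).IsPrime := RingHom.ker_isPrime _
  have hmin : RingHom.ker (kil (Finset.univ : Finset σ)) ∈
      (Ideal.span (Set.range F)).minimalPrimes := by
    refine ⟨⟨hp2, ?_⟩, ?_⟩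
    · rw [Ideal.span_le]
      rintro _ ⟨i, rfl⟩
      exact (hk _).2 (h0 i)
    · rintro J ⟨hJ, hIJ⟩ - f hf
      rw [hk] at hf
      have : f ∈ (Ideal.span (Set.range F)).radical := by
        rw [← MvPolynomial.vanishingIdeal_zeroLocus_eq_radical (K := ℂ)]
        rw [MvPolynomial.mem_vanishingIdeal_iff]
        intro x hx
        rw [MvPolynomial.zeroLocus_span] at hx
        have hx0 : x = 0 := by
          by_contra hne
          obtain ⟨i, hi⟩ := hcon x hne
          apply hi
          have := hx (F i) ⟨i, rfl⟩
          simpa using this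
        subst hx0
        simpa using hf
      exact (hJ.radical_le_iff.2 hIJ) this
  have h1 := Ideal.height_le_card_of_mem_minimalPrimes_span (Set.finite_range F) hmin
  have h2 := (kil_height (Finset.univ : Finset σ)).trans h1
  have h3 : (Set.range F).ncard ≤ Fintype.card ι := by
    rw [← Nat.card_coe_set_eq, ← Nat.card_eq_fintype_card]
    exact Finite.card_range_le F
  have h4 : Fintype.card σ ≤ (Set.range F).ncard := by
    rw [Finset.card_univ] at h2
    exact_mod_cast h2
  omega

end dim

section polys

variable {R : Type} [CommRing R]

noncomputable def Lp {p : ℕ} (α : Fin p → ℕ) (a : Fin p → R) : R[X] :=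
  ∑ i, C (α i : R) * ∏ l ∈ Finset.univ.erase i, (X - C (a l))

noncomputable def Rp {q f : ℕ} (n : ℕ) (β : Fin q → ℕ) (b : Fin q → R) (w : Fin f → R) : R[X] :=
  C (n : R) * ((∏ j, (X - C (b j)) ^ (β j - 1)) * ∏ k, (X - C (w k)))

lemma Lp_map {S : Type} [CommRing S] (g : R →+* S) {p : ℕ} (α : Fin p → ℕ) (a : Fin p → R) :
    (Lp α a).map g = Lp α (fun i => g (a i)) := by
  simp [Lp, Polynomial.map_sum, Polynomial.map_prod]

lemma Rp_map {S : Type} [CommRing S] (g : R →+* S) {q f : ℕ} (n : ℕ) (β : Fin q → ℕ)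
    (b : Fin q → R) (w : Fin f → R) :
    (Rp n β b w).map g = Rp n β (fun i => g (b i)) (fun i => g (w i)) := by
  simp [Rp, Polynomial.map_prod]

lemma sub_sum {q : ℕ} (n : ℕ) (β : Fin q → ℕ) (hβ : ∀ j, 0 < β j) (hs : ∑ j, β j = n) :
    ∑ j, (β j - 1) + q = n := by
  have : ∑ j, ((β j - 1) + 1) = n := by
    rw [← hs]
    exact Finset.sum_congr rfl fun j _ => Nat.sub_add_cancel (hβ j)
  simpa [Finset.sum_add_distrib] using this

lemma Lp_zero {p : ℕ} (n : ℕ) (α : Fin p → ℕ) (hs : ∑ j, α j = n) :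
    Lp α (fun _ => (0 : ℂ)) = C (n : ℂ) * X ^ (p - 1) := by
  simp [Lp, Finset.card_erase_of_mem, ← Finset.sum_mul, ← hs]

lemma Rp_zero {q f : ℕ} (n : ℕ) (β : Fin q → ℕ) (hβ : ∀ j, 0 < β j) (hs : ∑ j, β j = n) :
    Rp n β (fun _ => (0 : ℂ)) (fun _ : Fin f => 0) = C (n : ℂ) * X ^ (n - q + f) := by
  have := sub_sum n β hβ hs
  have h2 : ∑ j, (β j - 1) = n - q := by omega
  simp [Rp, Finset.prod_pow_eq_pow_sum, h2, pow_add]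

lemma Lp_eq_Rp {p q f n : ℕ} (α : Fin p → ℕ) (β : Fin q → ℕ) (a : Fin p → ℂ) (b : Fin q → ℂ)
    (w : Fin f → ℂ)
    (hβ : ∀ j, 0 < β j) (hαs : ∑ i, α i = n) (hβs : ∑ j, β j = n)
    (hf : n - q + f = p - 1)
    (h : ∀ k < p - 1, (Lp α a).coeff k = (Rp n β b w).coeff k) : Lp α a = Rp n β b w := by
  have hsub := sub_sum n β hβ hβs
  have hmon : ∀ i, (∏ l ∈ Finset.univ.erase i, (X - C (a l))).Monic :=
    fun i => monic_prod_of_monic _ _ fun l _ => monic_X_sub_C _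
  have hdeg : ∀ i, (∏ l ∈ Finset.univ.erase i, (X - C (a l))).natDegree = p - 1 := by
    intro i
    rw [natDegree_prod_of_monic _ _ fun l _ => monic_X_sub_C _]
    simp [Finset.card_erase_of_mem]
  have hmonR1 : (∏ j, (X - C (b j)) ^ (β j - 1)).Monic :=
    monic_prod_of_monic _ _ fun l _ => (monic_X_sub_C _).pow _
  have hmonR2 : (∏ k, (X - C (w k))).Monic :=
    monic_prod_of_monic _ _ fun l _ => monic_X_sub_C _
  have hmonR := hmonR1.mul hmonR2
  have hdegR : ((∏ j, (X - C (b j)) ^ (β j - 1)) * ∏ k, (X - C (w k))).natDegree = p - 1 := by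
    rw [hmonR1.natDegree_mul hmonR2,
      natDegree_prod_of_monic _ _ fun l _ => (monic_X_sub_C _).pow _,
      natDegree_prod_of_monic _ _ fun l _ => monic_X_sub_C _]
    simp
    omega
  ext k
  rcases lt_trichotomy k (p - 1) with hk | hk | hk
  · exact h k hk
  · subst hk
    have e1 : ∀ i, (∏ l ∈ Finset.univ.erase i, (X - C (a l))).coeff (p - 1) = 1 := by
      intro i
      have := (hmon i).coeff_natDegree
      rwa [hdeg i] at this
    have e2 : ((∏ j, (X - C (b j)) ^ (β j - 1)) * ∏ k, (X - C (w k))).coeff (p - 1) = 1 := by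
      have := hmonR.coeff_natDegree
      rwa [hdegR] at this
    rw [Lp, Rp, finset_sum_coeff]
    simp only [coeff_C_mul, e1, e2]
    simp [← hαs]
  · rw [Lp, Rp, finset_sum_coeff]
    simp only [coeff_C_mul]
    rw [coeff_eq_zero_of_natDegree_lt (p := (∏ j, (X - C (b j)) ^ (β j - 1)) * _) (by omega)]
    rw [Finset.sum_eq_zero]
    · simp
    · intro i _
      rw [coeff_eq_zero_of_natDegree_lt (by rw [hdeg i]; omega), mul_zero]

lemma deriv_prod {p : ℕ} (α : Fin p → ℕ) (hα : ∀ i, 0 < α i) (a : Fin p → ℂ) :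
    derivative (∏ i, (X - C (a i)) ^ α i) = (∏ i, (X - C (a i)) ^ (α i - 1)) * Lp α a := by
  rw [derivative_prod_finset, Lp, Finset.mul_sum]
  refine Finset.sum_congr rfl fun i _ => ?_
  rw [← Finset.mul_prod_erase Finset.univ (fun i => (X - C (a i)) ^ (α i - 1)) (Finset.mem_univ i)]
  have : ∏ l ∈ Finset.univ.erase i, (X - C (a l)) ^ α l =
      (∏ l ∈ Finset.univ.erase i, (X - C (a l)) ^ (α l - 1)) *
      ∏ l ∈ Finset.univ.erase i, (X - C (a l)) := by
    rw [← Finset.prod_mul_distrib]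
    refine Finset.prod_congr rfl fun l _ => ?_
    rw [← pow_succ, Nat.sub_add_cancel (hα l)]
  rw [this, derivative_X_sub_C_pow]
  ring

lemma one_root (P : ℂ[X]) (hP : 0 < P.natDegree)
    (h : ∀ z, (derivative P).IsRoot z → P.IsRoot z) :
    ∀ x y, P.IsRoot x → P.IsRoot y → x = y := by
  classical
  have hP0 : P ≠ 0 := by rintro rfl; simp at hP
  have hD : (derivative P).natDegree = P.natDegree - 1 := natDegree_derivative P
  have hD0 : derivative P ≠ 0 := by
    intro h0
    have := natDegree_eq_zero_of_derivative_eq_zero h0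
    omega
  have c1 : Multiset.card P.roots = P.natDegree := (IsAlgClosed.splits P).natDegree_eq_card_roots.symm
  have c2 : Multiset.card (derivative P).roots = P.natDegree - 1 := by
    rw [← hD]; exact (IsAlgClosed.splits _).natDegree_eq_card_roots.symm
  have s1 : ∑ e ∈ P.roots.toFinset, P.roots.count e = P.natDegree := by
    rw [Multiset.toFinset_sum_count_eq, c1]
  have s2 : ∑ e ∈ P.roots.toFinset, (derivative P).roots.count e = P.natDegree - 1 := by
    rw [← c2]
    apply Multiset.sum_count_eq_card
    intro e he
    rw [mem_roots hD0] at he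
    rw [Multiset.mem_toFinset, mem_roots hP0]
    exact h e he
  have s3 : ∀ e ∈ P.roots.toFinset, P.roots.count e = (derivative P).roots.count e + 1 := by
    intro e he
    rw [Multiset.mem_toFinset, mem_roots hP0] at he
    rw [count_roots, count_roots, derivative_rootMultiplicity_of_root he]
    have := (rootMultiplicity_pos hP0).2 he
    omega
  rw [Finset.sum_congr rfl s3, Finset.sum_add_distrib, s2] at s1
  simp only [Finset.sum_const, smul_eq_mul, mul_one] at s1
  have hcard : P.roots.toFinset.card ≤ 1 := by omega
  intro x y hx hy
  exact Finset.card_le_one.1 hcard x (by simp [hP0]; exact hx) y (by simp [hP0]; exact hy)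

lemma inj_of_Lp {p : ℕ} (α : Fin p → ℕ) (a : Fin p → ℂ)
    (h : ∀ i, (Lp α a).eval (a i) ≠ 0) : Function.Injective a := by
  intro i j hij
  by_contra hne
  apply h i
  rw [Lp, eval_finset_sum]
  refine Finset.sum_eq_zero fun l _ => ?_
  rw [eval_mul, eval_prod]
  by_cases hl : l = i
  · subst hl
    rw [Finset.prod_eq_zero (i := j), mul_zero]
    · simp; tauto
    · simp [hij]
  · rw [Finset.prod_eq_zero (i := i), mul_zero]
    · simp; tauto
    · simp

lemma core (n p q : ℕ) (hn : 1 ≤ n) (α : Fin p → ℕ) (β : Fin q → ℕ)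
    (hα : ∀ i, 0 < α i) (hβ : ∀ j, 0 < β j)
    (hαs : ∑ i, α i = n) (hβs : ∑ j, β j = n) (hpq : n + 1 ≤ p + q) :
    ∃ (a : Fin p → ℂ) (b : Fin q → ℂ) (c : ℂ), c ≠ 0 ∧
      Function.Injective a ∧ Function.Injective b ∧
      ∏ i, (X - C (a i)) ^ α i - ∏ j, (X - C (b j)) ^ β j = C c := by
  classical
  have hp : 0 < p := by
    rcases Nat.eq_zero_or_pos p with rfl | h
    · simp at hαs; omega
    · exact h
  have hq : 0 < q := by
    rcases Nat.eq_zero_or_pos q with rfl | h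
    · simp at hβs; omega
    · exact h
  have hpn := sub_sum n α hα hαs
  have hqn := sub_sum n β hβ hβs
  obtain ⟨f, hf⟩ : ∃ f, p + q = n + 1 + f := ⟨p + q - (n + 1), by omega⟩
  have hf1 : n - q + f = p - 1 := by omega
  have hf2 : n - p + f = q - 1 := by omega
  let σ := Fin p ⊕ Fin q ⊕ Fin f
  let A : Fin p → MvPolynomial σ ℂ := fun i => MvPolynomial.X (Sum.inl i)
  let B : Fin q → MvPolynomial σ ℂ := fun i => MvPolynomial.X (Sum.inr (Sum.inl i))
  let W : Fin f → MvPolynomial σ ℂ := fun i => MvPolynomial.X (Sum.inr (Sum.inr i))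
  let F : Unit ⊕ Fin (p - 1) ⊕ Fin (q - 1) ⊕ Fin f → MvPolynomial σ ℂ :=
    Sum.elim (fun _ => A ⟨0, hp⟩) (Sum.elim (fun k => (Lp α A - Rp n β B W).coeff k)
      (Sum.elim (fun k => (Lp β B - Rp n α A W).coeff k)
        (fun k => ∏ i, (W k - A i) ^ α i + ∏ j, (W k - B j) ^ β j)))
  have key1 : ∀ (x : σ → ℂ) k, MvPolynomial.eval x ((Lp α A - Rp n β B W).coeff k) =
      (Lp α (fun i => x (Sum.inl i))).coeff k - (Rp n β (fun i => x (Sum.inr (Sum.inl i)))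
        (fun i => x (Sum.inr (Sum.inr i)))).coeff k := by
    intro x k
    rw [← coeff_map, Polynomial.map_sub, Lp_map, Rp_map]
    simp [A, B, W]
  have key2 : ∀ (x : σ → ℂ) k, MvPolynomial.eval x ((Lp β B - Rp n α A W).coeff k) =
      (Lp β (fun i => x (Sum.inr (Sum.inl i)))).coeff k - (Rp n α (fun i => x (Sum.inl i))
        (fun i => x (Sum.inr (Sum.inr i)))).coeff k := by
    intro x k
    rw [← coeff_map, Polynomial.map_sub, Lp_map, Rp_map]
    simp [A, B, W]
  obtain ⟨x, hx0, hx⟩ := exists_nonzero F (by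
    rintro (_ | k | k | k)
    · simp [F, A]
    · simp only [F, Sum.elim_inr, Sum.elim_inl]
      rw [key1]
      simp only [Pi.zero_apply]
      rw [Lp_zero n α hαs, Rp_zero n β hβ hβs, hf1, sub_self]
    · simp only [F, Sum.elim_inr, Sum.elim_inl]
      rw [key2]
      simp only [Pi.zero_apply]
      rw [Lp_zero n β hβs, Rp_zero n α hα hαs, hf2, sub_self]
    · simp only [F, Sum.elim_inr]
      simp [A, B, W, Finset.prod_pow_eq_pow_sum, hαs, hβs]
      omega) (by simp [σ]; omega)
  set a : Fin p → ℂ := fun i => x (Sum.inl i) with ha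
  set b : Fin q → ℂ := fun i => x (Sum.inr (Sum.inl i)) with hb
  set w : Fin f → ℂ := fun i => x (Sum.inr (Sum.inr i)) with hw
  have ha0 : a ⟨0, hp⟩ = 0 := by simpa [F, A] using hx (Sum.inl ())
  have hL1 : Lp α a = Rp n β b w := Lp_eq_Rp α β a b w hβ hαs hβs hf1 (by
    intro k hk
    have := hx (Sum.inr (Sum.inl ⟨k, hk⟩))
    simp only [F, Sum.elim_inr, Sum.elim_inl] at this
    rw [key1] at this
    exact sub_eq_zero.1 this)
  have hL2 : Lp β b = Rp n α a w := Lp_eq_Rp β α b a w hα hβs hαs hf2 (by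
    intro k hk
    have := hx (Sum.inr (Sum.inr (Sum.inl ⟨k, hk⟩)))
    simp only [F, Sum.elim_inr, Sum.elim_inl] at this
    rw [key2] at this
    exact sub_eq_zero.1 this)
  set P : ℂ[X] := ∏ i, (X - C (a i)) ^ α i with hP
  set Q : ℂ[X] := ∏ j, (X - C (b j)) ^ β j with hQ
  have hw1 : ∀ k, P.eval (w k) + Q.eval (w k) = 0 := by
    intro k
    have := hx (Sum.inr (Sum.inr (Sum.inr k)))
    simpa [F, A, B, W, hP, hQ, eval_prod] using this
  have hPd : derivative P = (∏ i, (X - C (a i)) ^ (α i - 1)) * Lp α a := deriv_prod α hα a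
  have hQd : derivative Q = (∏ i, (X - C (b i)) ^ (β i - 1)) * Lp β b := deriv_prod β hβ b
  have hPQd : derivative (P - Q) = 0 := by
    rw [derivative_sub, hPd, hQd, hL1, hL2, Rp, Rp]
    ring
  obtain ⟨c, hc⟩ : ∃ c, P - Q = C c :=
    ⟨_, eq_C_of_natDegree_eq_zero (natDegree_eq_zero_of_derivative_eq_zero hPQd)⟩
  have hPa : ∀ i, P.eval (a i) = 0 := by
    intro i
    rw [hP, eval_prod, Finset.prod_eq_zero (Finset.mem_univ i)]
    simp [(hα i).ne']
  have hQb : ∀ i, Q.eval (b i) = 0 := by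
    intro i
    rw [hQ, eval_prod, Finset.prod_eq_zero (Finset.mem_univ i)]
    simp [(hβ i).ne']
  have hev : ∀ z, P.eval z - Q.eval z = c := by
    intro z
    rw [← eval_sub, hc, eval_C]
  have hn0 : (n : ℂ) ≠ 0 := by exact_mod_cast (by omega : n ≠ 0)
  have hc0 : c ≠ 0 := by
    rintro rfl
    have hPQ : ∀ z, P.eval z = Q.eval z := fun z => sub_eq_zero.1 (hev z)
    have hPw : ∀ k, P.eval (w k) = 0 := by
      intro k
      have h1 := hw1 k
      rw [← hPQ, ← two_mul] at h1
      simpa using h1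
    have hPb : ∀ k, P.eval (b k) = 0 := fun k => by rw [hPQ, hQb]
    have hdegP : P.natDegree = n := by
      rw [hP, natDegree_prod_of_monic _ _ fun l _ => (monic_X_sub_C _).pow _]
      simp [hαs]
    have hone := one_root P (by omega) (by
      intro z hz
      rw [IsRoot.def, hPd, hL1, Rp] at hz
      simp only [eval_mul, eval_prod, eval_pow, eval_sub, eval_X, eval_C, mul_eq_zero,
        Finset.prod_eq_zero_iff, hn0, false_or, Finset.mem_univ, true_and] at hz
      rcases hz with ⟨i, hi⟩ | ⟨i, hi⟩ | ⟨i, hi⟩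
      · rw [sub_eq_zero.1 (eq_zero_of_pow_eq_zero hi)]; exact hPa i
      · rw [sub_eq_zero.1 (eq_zero_of_pow_eq_zero hi)]; exact hPb i
      · rw [sub_eq_zero.1 hi]; exact hPw i)
    have h00 : P.IsRoot 0 := by rw [← ha0]; exact hPa _
    apply hx0
    funext s
    rcases s with i | i | i
    · exact hone _ _ (hPa i) h00
    · exact hone _ _ (hPb i) h00
    · exact hone _ _ (hPw i) h00
  have hab : ∀ i j, a i ≠ b j := by
    intro i j hij
    have h1 := hev (a i)
    rw [hPa, hij, hQb] at h1
    exact hc0 (by simpa using h1.symm)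
  have haw : ∀ i k, a i ≠ w k := by
    intro i k hik
    have h1 := hev (w k)
    have h2 := hw1 k
    rw [← hik, hPa] at h1 h2
    apply hc0
    rw [← h1]
    linear_combination -h2
  have hbw : ∀ i k, b i ≠ w k := by
    intro i k hik
    have h1 := hev (w k)
    have h2 := hw1 k
    rw [← hik, hQb] at h1 h2
    apply hc0
    rw [← h1]
    linear_combination h2
  refine ⟨a, b, c, hc0, inj_of_Lp α a ?_, inj_of_Lp β b ?_, hc⟩
  · intro i
    rw [hL1, Rp]
    simp only [eval_mul, eval_prod, eval_pow, eval_sub, eval_X, eval_C]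
    refine mul_ne_zero hn0 (mul_ne_zero ?_ ?_)
    · exact Finset.prod_ne_zero_iff.2 fun j _ => pow_ne_zero _ (sub_ne_zero.2 (hab i j))
    · exact Finset.prod_ne_zero_iff.2 fun j _ => sub_ne_zero.2 (haw i j)
  · intro i
    rw [hL2, Rp]
    simp only [eval_mul, eval_prod, eval_pow, eval_sub, eval_X, eval_C]
    refine mul_ne_zero hn0 (mul_ne_zero ?_ ?_)
    · exact Finset.prod_ne_zero_iff.2 fun j _ => pow_ne_zero _ (sub_ne_zero.2 (hab j i).symm)
    · exact Finset.prod_ne_zero_iff.2 fun j _ => sub_ne_zero.2 (hbw i j)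

lemma natDegree_pow_sub (P Q : ℂ[X]) (hP : P.Monic) (hQ : Q.Monic) (m d : ℕ) (hd : 0 < d)
    (hPm : P.natDegree = m) (hQm : Q.natDegree = m) (c : ℂ) (hc : c ≠ 0) (h : P - Q = C c) :
    (P ^ d - Q ^ d).natDegree = (d - 1) * m := by
  have hmon : ∀ i, (P ^ i * Q ^ (d - 1 - i)).Monic := fun i => (hP.pow _).mul (hQ.pow _)
  have hdeg : ∀ i ∈ Finset.range d, (P ^ i * Q ^ (d - 1 - i)).natDegree = (d - 1) * m := by
    intro i hi
    rw [Finset.mem_range] at hi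
    rw [(hP.pow _).natDegree_mul (hQ.pow _), hP.natDegree_pow, hQ.natDegree_pow, hPm, hQm,
      ← add_mul]
    congr 1
    omega
  rw [← (Commute.all P Q).geom_sum₂_mul, h, natDegree_mul_C hc]
  apply natDegree_eq_of_le_of_coeff_ne_zero
  · exact natDegree_sum_le_of_forall_le _ _ fun i hi => (hdeg i hi).le
  · rw [finset_sum_coeff, Finset.sum_congr rfl (g := fun _ => (1 : ℂ))]
    · simp; omega
    · intro i hi
      rw [← hdeg i hi]
      exact (hmon i).coeff_natDegree

end polys

end ZB

/-- Attainability of Zannier's weak bound: if `p + q > n/d + 1`, then there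
exist coprime monic `P, Q` with factorization patterns `α, β` such that
`deg (P - Q) = (d - 1)·n/d`. -/
theorem stmt7 (n p q d : ℕ) (hn : 1 ≤ n)
    (α : Fin p → ℕ) (β : Fin q → ℕ)
    (hα : ∀ i, 0 < α i) (hβ : ∀ j, 0 < β j)
    (hαsum : ∑ i, α i = n) (hβsum : ∑ j, β j = n)
    (hd : d = Nat.gcd (Finset.univ.gcd α) (Finset.univ.gcd β))
    (hpq : n / d + 1 < p + q) :
    ∃ (P Q : ℂ[X]) (a : Fin p → ℂ) (b : Fin q → ℂ),
      Function.Injective a ∧ Function.Injective b ∧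
      P = ∏ i, (X - C (a i)) ^ α i ∧
      Q = ∏ j, (X - C (b j)) ^ β j ∧
      IsCoprime P Q ∧
      (P - Q).natDegree = (d - 1) * (n / d) := by
  have hp : 0 < p := by
    rcases Nat.eq_zero_or_pos p with rfl | h
    · simp at hαsum; omega
    · exact h
  have hdα : ∀ i, d ∣ α i := fun i => by
    rw [hd]
    exact (Nat.gcd_dvd_left _ _).trans (Finset.gcd_dvd (Finset.mem_univ i))
  have hdβ : ∀ i, d ∣ β i := fun i => by
    rw [hd]
    exact (Nat.gcd_dvd_right _ _).trans (Finset.gcd_dvd (Finset.mem_univ i))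
  have hd0 : 0 < d := Nat.pos_of_dvd_of_pos (hdα ⟨0, hp⟩) (hα _)
  choose α' hα' using hdα
  choose β' hβ' using hdβ
  have hnα : n = d * ∑ i, α' i := by
    rw [← hαsum, Finset.mul_sum]
    exact Finset.sum_congr rfl fun i _ => hα' i
  have hnβ : n = d * ∑ i, β' i := by
    rw [← hβsum, Finset.mul_sum]
    exact Finset.sum_congr rfl fun i _ => hβ' i
  have hm1 : ∑ i, α' i = n / d := (Nat.div_eq_of_eq_mul_right hd0 hnα).symm
  have hm2 : ∑ i, β' i = n / d := (Nat.div_eq_of_eq_mul_right hd0 hnβ).symm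
  have hm0 : 1 ≤ n / d := by
    rw [← hm1]
    by_contra hcon
    have : ∑ i, α' i = 0 := by omega
    rw [this] at hnα
    omega
  obtain ⟨a, b, c, hc0, hainj, hbinj, hc⟩ := ZB.core (n / d) p q hm0 α' β'
    (fun i => Nat.pos_of_ne_zero fun h => by have := hα i; rw [hα', h] at this; omega)
    (fun i => Nat.pos_of_ne_zero fun h => by have := hβ i; rw [hβ', h] at this; omega)
    hm1 hm2 (by omega)
  have e1 : ∏ i, (X - C (a i)) ^ α i = (∏ i, (X - C (a i)) ^ α' i) ^ d := by
    rw [← Finset.prod_pow]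
    exact Finset.prod_congr rfl fun i _ => by rw [← pow_mul, hα' i, mul_comm]
  have e2 : ∏ i, (X - C (b i)) ^ β i = (∏ i, (X - C (b i)) ^ β' i) ^ d := by
    rw [← Finset.prod_pow]
    exact Finset.prod_congr rfl fun i _ => by rw [← pow_mul, hβ' i, mul_comm]
  refine ⟨_, _, a, b, hainj, hbinj, rfl, rfl, ?_, ?_⟩
  · rw [e1, e2]
    apply IsCoprime.pow
    refine ⟨C c⁻¹, -C c⁻¹, ?_⟩
    rw [neg_mul, ← sub_eq_add_neg, ← mul_sub, hc, ← C_mul, inv_mul_cancel₀ hc0, C_1]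
  · rw [e1, e2]
    refine ZB.natDegree_pow_sub _ _ (monic_prod_of_monic _ _ fun l _ => (monic_X_sub_C _).pow _)
      (monic_prod_of_monic _ _ fun l _ => (monic_X_sub_C _).pow _) _ _ hd0 ?_ ?_ c hc0 hc
    · rw [natDegree_prod_of_monic _ _ fun l _ => (monic_X_sub_C _).pow _]
      simp [hm1]
    · rw [natDegree_prod_of_monic _ _ fun l _ => (monic_X_sub_C _).pow _]
      simp [hm2]
end

section
/- Let n ≥ 1 and let α = (α_1, …, α_p) and β = (β_1, …, β_q) be partitions of n with p and q parts respectively, and suppose p + q ≥ n + 1. Then there exist coprime monic polynomials P, Q ∈ ℂ[X] with factorization patterns α and β respectively such that P − Q is a nonzero constant. -/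
open Polynomial

/-- product of powers of linear factors -/
noncomputable def pp {R ι : Type*} [CommRing R] (s : Finset ι) (α : ι → ℕ) (a : ι → R) : R[X] :=
  ∏ i ∈ s, (X - C (a i)) ^ α i

lemma pp_monic {R ι : Type*} [CommRing R] (s : Finset ι) (α : ι → ℕ) (a : ι → R) :
    (pp s α a).Monic :=
  monic_prod_of_monic _ _ fun i _ => (monic_X_sub_C _).pow _

lemma pp_map {R S ι : Type*} [CommRing R] [CommRing S] (f : R →+* S) (s : Finset ι) (α : ι → ℕ)
    (a : ι → R) : (pp s α a).map f = pp s α (fun i => f (a i)) := by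
  simp [pp, Polynomial.map_prod]

lemma pp_natDegree {R ι : Type*} [CommRing R] [Nontrivial R] (s : Finset ι) (α : ι → ℕ) (a : ι → R) :
    (pp s α a).natDegree = ∑ i ∈ s, α i := by
  unfold pp
  rw [natDegree_prod_of_monic _ _ fun i _ => (monic_X_sub_C _).pow _]
  refine Finset.sum_congr rfl fun i _ => ?_
  rw [(monic_X_sub_C _).natDegree_pow]; simp

lemma pp_eval {R ι : Type*} [CommRing R] (s : Finset ι) (α : ι → ℕ) (a : ι → R) (z : R) :
    (pp s α a).eval z = ∏ i ∈ s, (z - a i) ^ α i := by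
  simp [pp, eval_prod]

/-- split off a root -/
lemma pp_split {R ι : Type*} [CommRing R] [DecidableEq R] (s : Finset ι) (α : ι → ℕ) (a : ι → R)
    (r : R) :
    pp s α a = (X - C r) ^ (∑ i ∈ s with a i = r, α i) * pp (s.filter (fun i => ¬ a i = r)) α a := by
  unfold pp
  rw [← Finset.prod_filter_mul_prod_filter_not s (fun i => a i = r)]
  congr 1
  rw [← Finset.prod_pow_eq_pow_sum]
  refine Finset.prod_congr rfl fun i hi => ?_
  rw [(Finset.mem_filter.1 hi).2]

lemma pp_split_eval {R ι : Type*} [CommRing R] [IsDomain R] [DecidableEq R] (s : Finset ι)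
    (α : ι → ℕ) (a : ι → R) (r : R) :
    (pp (s.filter (fun i => ¬ a i = r)) α a).eval r ≠ 0 := by
  rw [pp_eval, Finset.prod_ne_zero_iff]
  intro i hi
  exact pow_ne_zero _ (sub_ne_zero.2 (Ne.symm (Finset.mem_filter.1 hi).2))

lemma pp_rootMult {k ι : Type*} [Field k] [DecidableEq k] (s : Finset ι)
    (α : ι → ℕ) (a : ι → k) (r : k) :
    (pp s α a).rootMultiplicity r = ∑ i ∈ s with a i = r, α i := by
  have h := pp_split s α a r
  have h1 := pp_split_eval s α a r
  rw [h, rootMultiplicity_mul (by rw [← h]; exact (pp_monic _ _ _).ne_zero),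
    rootMultiplicity_X_sub_C_pow, rootMultiplicity_eq_zero h1]
  simp

lemma pp_dvd_filter {k ι : Type*} [CommRing k] [DecidableEq k] (s : Finset ι)
    (α : ι → ℕ) (a : ι → k) (r : k) :
    (X - C r) ^ (∑ i ∈ s with a i = r, α i) ∣ pp s α a := by
  rw [pp_split s α a r]; exact dvd_mul_right _ _

lemma K1 {k ι κ : Type*} [Field k] [CharZero k] [DecidableEq k] (s : Finset ι) (t : Finset κ)
    (α : ι → ℕ) (β : κ → ℕ) (hα : ∀ i, 0 < α i) (hβ : ∀ j, 0 < β j) (x : ι → k) (y : κ → k)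
    (hxy : pp s α x = pp t β y) (U : k[X])
    (hM : pp s (fun i => α i - 1) x * pp t (fun j => β j - 1) y ∣
      U * derivative (pp s α x) - derivative U * pp s α x) (r : k) (hU : U.eval r ≠ 0)
    (hr : 0 < ∑ i ∈ s with x i = r, α i) :
    ∑ i ∈ s with x i = r, α i + 1 ≤ (s.filter (fun i => x i = r)).card +
      (t.filter (fun i => y i = r)).card := by
  have hE : ∑ i ∈ s with x i = r, α i = ∑ j ∈ t with y j = r, β j := by
    rw [← pp_rootMult, ← pp_rootMult, hxy]
  have e1 : ∑ i ∈ s with x i = r, (α i - 1) + (s.filter (fun i => x i = r)).card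
      = ∑ i ∈ s with x i = r, α i := by
    rw [Finset.card_eq_sum_ones, ← Finset.sum_add_distrib]
    exact Finset.sum_congr rfl fun i _ => Nat.sub_add_cancel (hα i)
  have e2 : ∑ i ∈ t with y i = r, (β i - 1) + (t.filter (fun i => y i = r)).card
      = ∑ i ∈ t with y i = r, β i := by
    rw [Finset.card_eq_sum_ones, ← Finset.sum_add_distrib]
    exact Finset.sum_congr rfl fun i _ => Nat.sub_add_cancel (hβ i)
  by_contra hcon
  have hm : ∑ i ∈ s with x i = r, α i ≤
     ∑ i ∈ s with x i = r, (α i - 1) + ∑ i ∈ t with y i = r, (β i - 1) := by omega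
  have hd := ((pow_dvd_pow (X - C r) hm).trans (by
    rw [pow_add]; exact mul_dvd_mul (pp_dvd_filter s _ x r) (pp_dvd_filter t _ y r))).trans hM
  have hs := pp_split s α x r
  have hH := pp_split_eval s α x r
  set H := pp (s.filter (fun i => ¬ x i = r)) α x
  set E := ∑ i ∈ s with x i = r, α i
  obtain ⟨e, he⟩ : ∃ e, E = e + 1 := ⟨E - 1, by omega⟩
  rw [hs, he] at hd
  have : U * derivative ((X - C r) ^ (e+1) * H) - derivative U * ((X - C r) ^ (e+1) * H)
    = (X - C r) ^ e * (U * (C ((e:k)+1) * H) + (X - C r) * (U * derivative H - derivative U * H)) := by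
    simp [derivative_mul, derivative_X_sub_C_pow]
    ring
  rw [this, pow_succ, mul_dvd_mul_iff_left (pow_ne_zero _ (X_sub_C_ne_zero r)),
    dvd_iff_isRoot] at hd
  simp [IsRoot] at hd
  rcases hd with h | h | h
  · exact hU h
  · exact (Nat.cast_add_one_ne_zero e) h
  · exact hH h

lemma K2 {k ι κ : Type*} [Field k] [CharZero k] [DecidableEq k] (s : Finset ι) (t : Finset κ)
    (α : ι → ℕ) (β : κ → ℕ) (hα : ∀ i, 0 < α i) (hβ : ∀ j, 0 < β j) (x : ι → k) (y : κ → k)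
    (hxy : pp s α x = pp t β y)
    (hM : pp s (fun i => α i - 1) x * pp t (fun j => β j - 1) y ∣
      X * derivative (pp s α x) - derivative X * pp s α x) :
    ∑ i ∈ s with x i = 0, α i ≤ (s.filter (fun i => x i = 0)).card +
      (t.filter (fun i => y i = 0)).card := by
  have hE : ∑ i ∈ s with x i = 0, α i = ∑ j ∈ t with y j = 0, β j := by
    rw [← pp_rootMult, ← pp_rootMult, hxy]
  have e1 : ∑ i ∈ s with x i = 0, (α i - 1) + (s.filter (fun i => x i = 0)).card
      = ∑ i ∈ s with x i = 0, α i := by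
    rw [Finset.card_eq_sum_ones, ← Finset.sum_add_distrib]
    exact Finset.sum_congr rfl fun i _ => Nat.sub_add_cancel (hα i)
  have e2 : ∑ i ∈ t with y i = 0, (β i - 1) + (t.filter (fun i => y i = 0)).card
      = ∑ i ∈ t with y i = 0, β i := by
    rw [Finset.card_eq_sum_ones, ← Finset.sum_add_distrib]
    exact Finset.sum_congr rfl fun i _ => Nat.sub_add_cancel (hβ i)
  by_contra hcon
  have hm : ∑ i ∈ s with x i = 0, α i + 1 ≤
     ∑ i ∈ s with x i = 0, (α i - 1) + ∑ i ∈ t with y i = 0, (β i - 1) := by omega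
  have hd := ((pow_dvd_pow (X - C 0) hm).trans (by
    rw [pow_add]; exact mul_dvd_mul (pp_dvd_filter s _ x 0) (pp_dvd_filter t _ y 0))).trans hM
  have hs := pp_split s α x 0
  have hH := pp_split_eval s α x 0
  have hcard : 0 < ∑ i ∈ s with x i = 0, α i → 0 < (s.filter (fun i => x i = 0)).card := by
    intro h
    rw [Finset.card_pos]
    by_contra h0
    rw [Finset.not_nonempty_iff_eq_empty] at h0
    rw [h0] at h; simp at h
  set H := pp (s.filter (fun i => ¬ x i = 0)) α x
  set E := ∑ i ∈ s with x i = 0, α i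
  obtain ⟨e, he⟩ : ∃ e, E = e + 2 := ⟨E - 2, by omega⟩
  rw [hs, he] at hd
  have : X * derivative ((X - C 0) ^ (e+2) * H) - derivative X * ((X - C 0) ^ (e+2) * H)
    = (X - C 0) ^ (e+2) * ((C ((e:k)+1) * H) + (X - C 0) * derivative H) := by
    simp [derivative_mul]
    ring
  rw [this, pow_succ _ (e+2), mul_dvd_mul_iff_left (pow_ne_zero _ (X_sub_C_ne_zero 0)),
    dvd_iff_isRoot] at hd
  simp [IsRoot] at hd
  rcases hd with h | h
  · exact (Nat.cast_add_one_ne_zero e) h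
  · exact hH h

lemma K3 {k ι κ : Type*} [Field k] [CharZero k] [DecidableEq k] (s : Finset ι) (t : Finset κ)
    (α : ι → ℕ) (β : κ → ℕ) (hα : ∀ i, 0 < α i) (hβ : ∀ j, 0 < β j) (x : ι → k) (y : κ → k)
    (hxy : pp s α x = pp t β y) (U : k[X]) (hUX : U = X ∨ U = 1)
    (hM : pp s (fun i => α i - 1) x * pp t (fun j => β j - 1) y ∣
      U * derivative (pp s α x) - derivative U * pp s α x) (T : Finset k)
    (hT : ∀ r ∈ T, U.eval r ≠ 0 ∧ ((∃ i ∈ s, x i = r) ∨ ∃ j ∈ t, y j = r)) :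
    ∑ i ∈ s, α i + T.card ≤ s.card + t.card := by
  classical
  have hE : ∀ r, ∑ i ∈ s with x i = r, α i = ∑ j ∈ t with y j = r, β j := by
    intro r
    rw [← pp_rootMult, ← pp_rootMult, hxy]
  have hpos : ∀ r, ((∃ i ∈ s, x i = r) ∨ ∃ j ∈ t, y j = r) → 0 < ∑ i ∈ s with x i = r, α i := by
    rintro r (⟨i, hi, hr⟩ | ⟨j, hj, hr⟩)
    · exact Finset.sum_pos (fun i _ => hα i) ⟨i, by simp [hi, hr]⟩
    · rw [hE]; exact Finset.sum_pos (fun i _ => hβ i) ⟨j, by simp [hj, hr]⟩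
  set Z := s.image x ∪ t.image y
  have hTZ : T ⊆ Z := by
    intro r hr
    rcases (hT r hr).2 with ⟨i, hi, h⟩ | ⟨i, hi, h⟩
    · exact Finset.mem_union_left _ (h ▸ Finset.mem_image_of_mem _ hi)
    · exact Finset.mem_union_right _ (h ▸ Finset.mem_image_of_mem _ hi)
  have c1 : s.card = ∑ r ∈ Z, (s.filter (fun i => x i = r)).card :=
    Finset.card_eq_sum_card_fiberwise fun i hi => Finset.mem_union_left _ (Finset.mem_image_of_mem _ hi)
  have c2 : t.card = ∑ r ∈ Z, (t.filter (fun i => y i = r)).card :=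
    Finset.card_eq_sum_card_fiberwise fun i hi => Finset.mem_union_right _ (Finset.mem_image_of_mem _ hi)
  have c3 : ∑ i ∈ s, α i = ∑ r ∈ Z, ∑ i ∈ s with x i = r, α i :=
    (Finset.sum_fiberwise_of_maps_to
      (fun i hi => Finset.mem_union_left _ (Finset.mem_image_of_mem _ hi)) α).symm
  have c4 : T.card = ∑ r ∈ Z, if r ∈ T then 1 else 0 := by
    rw [Finset.sum_ite_mem, Finset.inter_eq_right.2 hTZ, Finset.card_eq_sum_ones]
  rw [c1, c2, c3, c4, ← Finset.sum_add_distrib, ← Finset.sum_add_distrib]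
  refine Finset.sum_le_sum fun r hr => ?_
  split_ifs with h
  · exact K1 s t α β hα hβ x y hxy U hM r (hT r h).1 (hpos r (hT r h).2)
  · by_cases hU : U.eval r = 0
    · rcases hUX with rfl | rfl
      · simp at hU; subst hU
        exact K2 s t α β hα hβ x y hxy hM
      · simp at hU
    · have hp : 0 < ∑ i ∈ s with x i = r, α i := by
        apply hpos
        simp [Z] at hr; exact hr
      exact (Nat.le_succ _).trans (K1 s t α β hα hβ x y hxy U hM r hU hp)


lemma pp_sub_one_dvd {R ι : Type*} [CommRing R] (s : Finset ι) (α : ι → ℕ) (a : ι → R) :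
    pp s (fun i => α i - 1) a ∣ pp s α a :=
  Finset.prod_dvd_prod_of_dvd _ _ fun i _ => pow_dvd_pow _ (Nat.sub_le _ _)

lemma pp_sub_one_dvd_derivative {R ι : Type*} [CommRing R] (s : Finset ι) (α : ι → ℕ) (a : ι → R) :
    pp s (fun i => α i - 1) a ∣ derivative (pp s α a) := by
  classical
  unfold pp
  rw [derivative_prod_finset]
  refine Finset.dvd_sum fun i hi => ?_
  rw [← Finset.prod_erase_mul _ _ hi]
  refine mul_dvd_mul (Finset.prod_dvd_prod_of_dvd _ _ fun i _ => pow_dvd_pow _ (Nat.sub_le _ _)) ?_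
  rw [derivative_X_sub_C_pow]
  exact dvd_mul_left _ _

lemma monic_dvd_of_dvd_C_mul {R : Type*} [CommRing R] [IsDomain R] {M N : R[X]} (hM : M.Monic)
    {c : R} (hc : c ≠ 0) (h : M ∣ C c * N) : M ∣ N := by
  rw [← modByMonic_eq_zero_iff_dvd hM] at h ⊢
  rw [← smul_eq_C_mul, smul_modByMonic] at h
  exact (smul_eq_zero.1 h).resolve_left hc

lemma CLalg {O ι κ : Type*} [CommRing O] [IsDomain O] [IsLocalRing O] (s : Finset ι) (t : Finset κ)
    (α : ι → ℕ) (β : κ → ℕ) (x : ι → O) (y : κ → O) (G H U : O[X]) (c e : O)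
    (hG : G.map (IsLocalRing.residue O) = 1) (hH : H.map (IsLocalRing.residue O) = 1)
    (he : e ∈ IsLocalRing.maximalIdeal O) (he0 : e ≠ 0)
    (heq : pp s α x * G - C c * (pp t β y * H) = C e * U) :
    pp s α (fun i => IsLocalRing.residue O (x i)) = pp t β (fun i => IsLocalRing.residue O (y i)) ∧
    pp s (fun i => α i - 1) (fun i => IsLocalRing.residue O (x i)) *
      pp t (fun j => β j - 1) (fun i => IsLocalRing.residue O (y i)) ∣
      U.map (IsLocalRing.residue O) * derivative (pp s α (fun i => IsLocalRing.residue O (x i))) -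
      derivative (U.map (IsLocalRing.residue O)) * pp s α (fun i => IsLocalRing.residue O (x i)) := by
  constructor
  · have h := congrArg (Polynomial.map (IsLocalRing.residue O)) heq
    simp only [Polynomial.map_sub, Polynomial.map_mul, hG, hH, pp_map, Polynomial.map_C,
      (IsLocalRing.residue_eq_zero_iff e).2 he] at h
    simp only [mul_one, map_zero, zero_mul, sub_eq_zero] at h
    have h2 := congrArg leadingCoeff h
    rw [(pp_monic _ _ _).leadingCoeff, leadingCoeff_mul, (pp_monic _ _ _).leadingCoeff,
      leadingCoeff_C, mul_one] at h2
    rw [h, ← h2]; simp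
  · set A := pp s α x
    set B := pp t β y
    set A1 := pp s (fun i => α i - 1) x
    set B1 := pp t (fun j => β j - 1) y
    have hAP : A1 ∣ A * G := (pp_sub_one_dvd s α x).mul_right _
    have hBP : B1 ∣ B * H := (pp_sub_one_dvd t β y).mul_right _
    have hAP' : A1 ∣ derivative (A * G) := by
      rw [derivative_mul]
      exact dvd_add ((pp_sub_one_dvd_derivative s α x).mul_right _)
        ((pp_sub_one_dvd s α x).mul_right _)
    have hBP' : B1 ∣ derivative (B * H) := by
      rw [derivative_mul]
      exact dvd_add ((pp_sub_one_dvd_derivative t β y).mul_right _)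
        ((pp_sub_one_dvd t β y).mul_right _)
    have key : A1 * B1 ∣ C e * (U * derivative (A * G) - derivative U * (A * G)) := by
      have hd := congrArg derivative heq
      rw [derivative_sub, derivative_C_mul, derivative_C_mul] at hd
      have : C e * (U * derivative (A * G) - derivative U * (A * G)) =
        C c * (A * G * derivative (B * H) - derivative (A * G) * (B * H)) := by
        linear_combination (-derivative (A*G)) * heq + (A * G) * hd
      rw [this]
      exact Dvd.dvd.mul_left (dvd_sub (mul_dvd_mul hAP hBP') (mul_dvd_mul hAP' hBP)) _
    have k2 := monic_dvd_of_dvd_C_mul ((pp_monic _ _ _).mul (pp_monic _ _ _)) he0 key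
    have k3 := Polynomial.map_dvd (IsLocalRing.residue O) k2
    rw [Polynomial.map_mul, pp_map, pp_map, Polynomial.map_sub, Polynomial.map_mul,
      Polynomial.map_mul, ← Polynomial.derivative_map, ← Polynomial.derivative_map,
      Polynomial.map_mul, hG, mul_one, pp_map] at k3
    exact k3


/-- the leading scale of the recentered polynomial -/
noncomputable def gam {K ι : Type*} [Field K] [Fintype ι] [DecidableEq ι] (s : Finset ι) (α : ι → ℕ)
    (a : ι → K) (y d : K) : K := d ^ (∑ i ∈ s, α i) * ∏ i ∈ sᶜ, (y - a i) ^ α i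

lemma CL_lift {K ι : Type*} [Field K] [Fintype ι] [DecidableEq ι] (O : ValuationSubring K)
    (s : Finset ι) (α : ι → ℕ) (a : ι → K) (y d : K) (hd : d ≠ 0)
    (hs : ∀ i ∈ s, O.valuation (a i - y) ≤ O.valuation d)
    (hs' : ∀ i ∉ s, O.valuation d < O.valuation (a i - y)) :
    ∃ (x : ι → O) (G : O[X]), (∀ i ∈ s, (x i : K) = (a i - y) / d) ∧
      G.map (IsLocalRing.residue O) = 1 ∧
      (pp Finset.univ α a).comp (C y + C d * X) =
        C (gam s α a y d) * (pp s α x * G).map O.subtype := by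
  classical
  have hvd : 0 < O.valuation d := by
    rw [zero_lt_iff]; exact (Valuation.ne_zero_iff _).2 hd
  have h1 : ∀ i ∈ s, (a i - y) / d ∈ O := by
    intro i hi
    rw [← O.valuation_le_one_iff, map_div₀]
    exact div_le_one_of_le₀ (hs i hi) zero_le
  have hne : ∀ i ∉ s, a i - y ≠ 0 := by
    intro i hi h
    have := hs' i hi
    rw [h, map_zero] at this
    exact absurd this (not_lt.2 zero_le)
  have h2 : ∀ i ∉ s, O.valuation (d / (a i - y)) < 1 := by
    intro i hi
    rw [map_div₀]
    have := hs' i hi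
    rwa [div_lt_one₀ (hvd.trans this)]
  let x : ι → O := fun i => if h : i ∈ s then ⟨(a i - y) / d, h1 i h⟩ else 0
  let e : ι → O := fun i => if h : i ∈ s then 0 else
    ⟨d / (a i - y), (O.valuation_le_one_iff _).1 (h2 i h).le⟩
  have hx : ∀ i ∈ s, (x i : K) = (a i - y) / d := by
    intro i hi; simp [x, hi]
  have hee : ∀ i ∉ s, (e i : K) = d / (a i - y) := by
    intro i hi; simp [e, hi]
  have he : ∀ i ∉ s, IsLocalRing.residue O (e i) = 0 := by
    intro i hi
    rw [IsLocalRing.residue_eq_zero_iff, O.valuation_lt_one_iff, hee i hi]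
    exact h2 i hi
  refine ⟨x, ∏ i ∈ sᶜ, (1 - C (e i) * X) ^ α i, hx, ?_, ?_⟩
  · rw [Polynomial.map_prod]
    refine Finset.prod_eq_one fun i hi => ?_
    simp [he i (Finset.mem_compl.1 hi)]
  · unfold pp gam
    rw [Polynomial.map_mul, Polynomial.map_prod, Polynomial.map_prod, prod_comp,
      ← Finset.prod_mul_prod_compl s, C_mul, map_pow, map_prod,
      ← Finset.prod_pow_eq_pow_sum, mul_mul_mul_comm, ← Finset.prod_mul_distrib,
      ← Finset.prod_mul_distrib]
    congr 1
    · refine Finset.prod_congr rfl fun i hi => ?_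
      simp only [pow_comp, sub_comp, X_comp, C_comp, Polynomial.map_pow, Polynomial.map_sub,
        Polynomial.map_X, Polynomial.map_C, ValuationSubring.subtype_apply, hx i hi]
      rw [← mul_pow, mul_sub, ← C_mul, mul_div_cancel₀ _ hd, C_sub]
      ring
    · refine Finset.prod_congr rfl fun i hi => ?_
      have hi := Finset.mem_compl.1 hi
      simp only [pow_comp, sub_comp, X_comp, C_comp, Polynomial.map_pow, Polynomial.map_sub,
        Polynomial.map_X, Polynomial.map_C, ValuationSubring.subtype_apply, hee i hi,
        Polynomial.map_one, Polynomial.map_mul]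
      rw [C_pow, ← mul_pow]
      congr 1
      have : (y - a i) * (d / (a i - y)) = -d := by
        have := hne i hi
        field_simp
        ring
      rw [mul_sub, ← mul_assoc, ← C_mul, this]
      simp; ring

lemma CL {K ι κ : Type*} [Field K] [Fintype ι] [DecidableEq ι] [Fintype κ] [DecidableEq κ]
    (O : ValuationSubring K) (α : ι → ℕ) (β : κ → ℕ) (a : ι → K) (b : κ → K)
    (hPQ : pp Finset.univ α a - pp Finset.univ β b = X) (y d : K) (hd : d ≠ 0)
    (s : Finset ι) (t : Finset κ)
    (hs : ∀ i ∈ s, O.valuation (a i - y) ≤ O.valuation d)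
    (hs' : ∀ i ∉ s, O.valuation d < O.valuation (a i - y))
    (ht : ∀ i ∈ t, O.valuation (b i - y) ≤ O.valuation d)
    (ht' : ∀ i ∉ t, O.valuation d < O.valuation (b i - y))
    (hΓ : O.valuation (gam t β b y d) ≤ O.valuation (gam s α a y d))
    (hy : y = 0 ∧ O.valuation d < O.valuation (gam s α a y d) ∨
      O.valuation d < O.valuation y ∧ O.valuation y < O.valuation (gam s α a y d)) :
    ∃ (x : ι → O) (z : κ → O) (U : (IsLocalRing.ResidueField O)[X]),
      (∀ i ∈ s, (x i : K) = (a i - y) / d) ∧ (∀ i ∈ t, (z i : K) = (b i - y) / d) ∧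
      (U = X ∨ U = 1) ∧ (y = 0 → U = X) ∧ (y ≠ 0 → U = 1) ∧
    pp s α (fun i => IsLocalRing.residue O (x i)) = pp t β (fun i => IsLocalRing.residue O (z i)) ∧
    pp s (fun i => α i - 1) (fun i => IsLocalRing.residue O (x i)) *
      pp t (fun j => β j - 1) (fun i => IsLocalRing.residue O (z i)) ∣
      U * derivative (pp s α (fun i => IsLocalRing.residue O (x i))) -
      derivative U * pp s α (fun i => IsLocalRing.residue O (x i)) := by
  obtain ⟨x, G, hx, hG, hP⟩ := CL_lift O s α a y d hd hs hs'
  obtain ⟨z, H, hz, hH, hQ⟩ := CL_lift O t β b y d hd ht ht'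
  set Γ := gam s α a y d
  set Δ := gam t β b y d
  have hΓ0 : Γ ≠ 0 := by
    intro h
    rw [h, map_zero] at hy
    rcases hy with h | h
    · exact absurd h.2 (not_lt.2 zero_le)
    · exact absurd h.2 (not_lt.2 zero_le)
  have hvΓ : 0 < O.valuation Γ := by
    rw [zero_lt_iff]; exact (Valuation.ne_zero_iff _).2 hΓ0
  have hvd : 0 < O.valuation d := by
    rw [zero_lt_iff]; exact (Valuation.ne_zero_iff _).2 hd
  have hcO : Δ / Γ ∈ O := by
    rw [← O.valuation_le_one_iff, map_div₀]
    exact div_le_one_of_le₀ hΓ zero_le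
  have hcomp : (pp Finset.univ α a).comp (C y + C d * X) - (pp Finset.univ β b).comp (C y + C d * X)
      = C y + C d * X := by
    rw [← sub_comp, hPQ, X_comp]
  have main : ∀ (U : O[X]) (T : K), T ≠ 0 → O.valuation T < O.valuation Γ →
      C T * U.map O.subtype = C y + C d * X → ∃ e : O, e ∈ IsLocalRing.maximalIdeal O ∧ e ≠ 0 ∧
      pp s α x * G - C (⟨Δ / Γ, hcO⟩ : O) * (pp t β z * H) = C e * U := by
    intro U T hT0 hT hU
    have hlt : O.valuation (T / Γ) < 1 := by
      rw [map_div₀]; rwa [div_lt_one₀ hvΓ]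
    refine ⟨⟨T / Γ, (O.valuation_le_one_iff _).1 hlt.le⟩, (O.valuation_lt_one_iff _).2 hlt, ?_, ?_⟩
    · intro h
      have := congrArg (Subtype.val) h
      simp [hT0, hΓ0] at this
    · apply Polynomial.map_injective O.subtype Subtype.val_injective
      rw [Polynomial.map_sub, Polynomial.map_mul (p := C _), Polynomial.map_mul (p := C _)]
      rw [Polynomial.map_C, Polynomial.map_C]
      simp only [ValuationSubring.subtype_apply]
      apply mul_left_cancel₀ (C_ne_zero.2 hΓ0)
      rw [mul_sub, ← mul_assoc, ← mul_assoc, ← C_mul, ← C_mul, mul_div_cancel₀ _ hΓ0,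
        mul_div_cancel₀ _ hΓ0, hU, ← hP, ← hQ, hcomp]
  rcases hy with ⟨rfl, h⟩ | ⟨h1, h2⟩
  · obtain ⟨e, he, he0, heq⟩ := main X d hd h (by simp)
    obtain ⟨r1, r2⟩ := CLalg s t α β x z G H X _ e hG hH he he0 heq
    rw [Polynomial.map_X] at r2
    exact ⟨x, z, X, hx, hz, Or.inl rfl, fun _ => rfl, fun h => absurd rfl h, r1, r2⟩
  · have hy0 : y ≠ 0 := by
      rintro rfl
      rw [map_zero] at h1
      exact absurd h1 (not_lt.2 zero_le)
    have hlt : O.valuation (d / y) < 1 := by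
      rw [map_div₀]; rwa [div_lt_one₀ (hvd.trans h1)]
    set f : O := ⟨d / y, (O.valuation_le_one_iff _).1 hlt.le⟩
    have hf : IsLocalRing.residue O f = 0 := by
      rw [IsLocalRing.residue_eq_zero_iff, O.valuation_lt_one_iff]; exact hlt
    obtain ⟨e, he, he0, heq⟩ := main (1 + C f * X) y hy0 h2 (by
      simp [f, mul_add]
      rw [← mul_assoc, ← C_mul, mul_div_cancel₀ _ hy0])
    obtain ⟨r1, r2⟩ := CLalg s t α β x z G H _ _ e hG hH he he0 heq
    have : (1 + C f * X : O[X]).map (IsLocalRing.residue O) = 1 := by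
      simp [hf]
    rw [this] at r2
    exact ⟨x, z, 1, hx, hz, Or.inr rfl, fun h => absurd h hy0, fun _ => rfl, r1, r2⟩


lemma gam_univ {K ι : Type*} [Field K] [Fintype ι] [DecidableEq ι] (α : ι → ℕ)
    (a : ι → K) (y d : K) : gam Finset.univ α a y d = d ^ (∑ i, α i) := by
  simp [gam]

lemma gam_val {K ι : Type*} [Field K] [Fintype ι] [DecidableEq ι] (O : ValuationSubring K)
    (s : Finset ι) (α : ι → ℕ) (a : ι → K) (d : K) (l : K)
    (h : ∀ i ∉ s, O.valuation (a i) = O.valuation l) :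
    O.valuation (gam s α a 0 d) =
      O.valuation d ^ (∑ i ∈ s, α i) * O.valuation l ^ (∑ i ∈ sᶜ, α i) := by
  unfold gam
  rw [map_mul, map_pow, map_prod, ← Finset.prod_pow_eq_pow_sum sᶜ]
  congr 1
  refine Finset.prod_congr rfl fun i hi => ?_
  rw [map_pow, zero_sub, Valuation.map_neg, h i (Finset.mem_compl.1 hi)]

lemma pp_fiber {k ι κ : Type*} [Field k] [DecidableEq k] {s : Finset ι} {t : Finset κ}
    {α : ι → ℕ} {β : κ → ℕ} {x : ι → k} {y : κ → k}
    (hxy : pp s α x = pp t β y) (r : k) :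
    ∑ i ∈ s with x i = r, α i = ∑ j ∈ t with y j = r, β j := by
  rw [← pp_rootMult, ← pp_rootMult, hxy]

lemma VP_res {K ι κ : Type*} [Field K] [IsAlgClosed K] [Fintype ι] [DecidableEq ι] [Fintype κ]
    [DecidableEq κ] (O : ValuationSubring K) [CharZero (IsLocalRing.ResidueField O)]
    (n : ℕ) (hn : 2 ≤ n)
    (α : ι → ℕ) (β : κ → ℕ) (hα : ∀ i, 0 < α i) (hβ : ∀ j, 0 < β j)
    (hαn : ∑ i, α i = n) (hβn : ∑ j, β j = n) (hcard : Fintype.card ι + Fintype.card κ = n + 1)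
    (a : ι → K) (b : κ → K)
    (hPQ : pp Finset.univ α a - pp Finset.univ β b = X)
    (hg : 1 ≤ O.valuation ((pp Finset.univ α a).eval 0))
    (hbig : ∃ m, 1 < O.valuation (Sum.elim a b m)) :
    ∃ (x : ι → IsLocalRing.ResidueField O) (z : κ → IsLocalRing.ResidueField O),
      pp Finset.univ α x - pp Finset.univ β z = 1 := by
  classical
  set v := O.valuation with hv
  obtain ⟨m0, hm0⟩ := hbig
  have : Nonempty (ι ⊕ κ) := ⟨m0⟩
  obtain ⟨M, hM⟩ := Finite.exists_max (fun m => v (Sum.elim a b m))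
  set l := Sum.elim a b M with hl
  have hl1 : 1 < v l := hm0.trans_le (hM m0)
  have hl0 : l ≠ 0 := by
    rintro h
    rw [h, map_zero] at hl1
    exact absurd hl1 (not_lt.2 zero_le)
  have hma : ∀ i, v (a i) ≤ v l := fun i => hM (Sum.inl i)
  have hmb : ∀ i, v (b i) ≤ v l := fun i => hM (Sum.inr i)
  have hlt : v l < v (l ^ n) := by
    rw [map_pow]
    calc v l = v l ^ 1 := (pow_one _).symm
      _ < v l ^ n := pow_lt_pow_right₀ hl1 (by omega)
  have hvg : v ((pp Finset.univ α a).eval 0) = ∏ i, v (a i) ^ α i := by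
    rw [pp_eval, map_prod]; simp
  have hg2 : (pp Finset.univ β b).eval 0 = (pp Finset.univ α a).eval 0 := by
    have := congrArg (Polynomial.eval 0) hPQ
    simp [sub_eq_zero] at this; exact this.symm
  have hg0 : (pp Finset.univ α a).eval 0 ≠ 0 := by
    intro h
    rw [h, map_zero] at hg
    exact absurd zero_lt_one (not_lt.2 hg)
  have hw0 : ∀ m, Sum.elim a b m ≠ 0 := by
    rintro (i | j) h
    · apply hg0
      rw [pp_eval]
      refine Finset.prod_eq_zero (Finset.mem_univ i) ?_
      have : a i = 0 := h
      simp [this, (hα i).ne']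
    · apply hg0
      rw [← hg2, pp_eval]
      refine Finset.prod_eq_zero (Finset.mem_univ j) ?_
      have : b j = 0 := h
      simp [this, (hβ j).ne']
  -- step 1
  obtain ⟨x, z, U, hx, hz, hUU, hU, -, hxz, hdvd⟩ := CL O α β a b hPQ 0 l hl0 Finset.univ Finset.univ
    (by simpa using hma) (by simp) (by simpa using hmb) (by simp)
    (by simp [gam_univ, hαn, hβn]) (Or.inl ⟨rfl, by rw [gam_univ, hαn]; exact hlt⟩)
  have hU := hU rfl
  subst hU
  have res0 : ∀ (u : O) (c : K), (u : K) = c / l → (IsLocalRing.residue O u = 0 ↔ v c < v l) := by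
    intro u c hu
    rw [IsLocalRing.residue_eq_zero_iff, O.valuation_lt_one_iff, hu, map_div₀,
      div_lt_one₀ (zero_lt_one.trans hl1)]
  have hxa : ∀ i, (x i : K) = a i / l := fun i => by rw [hx i (Finset.mem_univ _), sub_zero]
  have hzb : ∀ i, (z i : K) = b i / l := fun i => by rw [hz i (Finset.mem_univ _), sub_zero]
  have hone : ∀ (u : O), (u : K) = 1 → IsLocalRing.residue O u = 1 := by
    intro u hu
    have : u = 1 := Subtype.ext hu
    rw [this, map_one]
  have hr1 : (∃ i ∈ Finset.univ, IsLocalRing.residue O (x i) = 1) ∨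
      ∃ j ∈ Finset.univ, IsLocalRing.residue O (z j) = 1 := by
    rcases M with i | j
    · left
      refine ⟨i, Finset.mem_univ _, hone _ ?_⟩
      rw [hxa]; exact div_self hl0
    · right
      refine ⟨j, Finset.mem_univ _, hone _ ?_⟩
      rw [hzb]; exact div_self hl0
  have hcu : (Finset.univ : Finset ι).card + (Finset.univ : Finset κ).card = n + 1 := by
    simpa using hcard
  have honly : ∀ r, ((∃ i ∈ Finset.univ, IsLocalRing.residue O (x i) = r) ∨
      ∃ j ∈ Finset.univ, IsLocalRing.residue O (z j) = r) → r = 0 ∨ r = 1 := by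
    intro r hr
    by_contra hcon
    push Not at hcon
    have := K3 Finset.univ Finset.univ α β hα hβ _ _ hxz X hUU hdvd {1, r} (by
      intro r' hr'
      simp only [Finset.mem_insert, Finset.mem_singleton] at hr'
      rcases hr' with rfl | rfl
      · exact ⟨by simp, hr1⟩
      · exact ⟨by simpa using hcon.1, hr⟩)
    rw [Finset.card_pair hcon.2.symm] at this
    omega
  set s0 := Finset.univ.filter (fun i => IsLocalRing.residue O (x i) = 0) with hs0
  set t0 := Finset.univ.filter (fun i => IsLocalRing.residue O (z i) = 0) with ht0
  have hs0m : ∀ i, i ∈ s0 ↔ v (a i) < v l := fun i => by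
    rw [← res0 (x i) (a i) (hxa i)]; simp [hs0]
  have ht0m : ∀ i, i ∈ t0 ↔ v (b i) < v l := fun i => by
    rw [← res0 (z i) (b i) (hzb i)]; simp [ht0]
  have hs0c : s0ᶜ = Finset.univ.filter (fun i => IsLocalRing.residue O (x i) = 1) := by
    ext i
    simp only [hs0, Finset.mem_compl, Finset.mem_filter, Finset.mem_univ, true_and]
    constructor
    · intro h
      exact (honly _ (Or.inl ⟨i, Finset.mem_univ _, rfl⟩)).resolve_left h
    · intro h; rw [h]; exact one_ne_zero
  have ht0c : t0ᶜ = Finset.univ.filter (fun i => IsLocalRing.residue O (z i) = 1) := by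
    ext i
    simp only [ht0, Finset.mem_compl, Finset.mem_filter, Finset.mem_univ, true_and]
    constructor
    · intro h
      exact (honly _ (Or.inr ⟨i, Finset.mem_univ _, rfl⟩)).resolve_left h
    · intro h; rw [h]; exact one_ne_zero
  have hE0 : ∑ i ∈ s0, α i = ∑ j ∈ t0, β j := by
    exact pp_fiber hxz 0
  have hE1 : ∑ i ∈ s0ᶜ, α i = ∑ j ∈ t0ᶜ, β j := by
    rw [hs0c, ht0c]; exact pp_fiber hxz 1
  have hsumα : ∑ i ∈ s0, α i + ∑ i ∈ s0ᶜ, α i = n := by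
    rw [Finset.sum_add_sum_compl, hαn]
  have hpos1 : 0 < ∑ i ∈ s0ᶜ, α i := by
    rcases hr1 with ⟨i, _, hi⟩ | ⟨j, _, hj⟩
    · exact Finset.sum_pos (fun i _ => hα i) ⟨i, by rw [hs0c]; simp [hi]⟩
    · rw [hE1]; exact Finset.sum_pos (fun i _ => hβ i) ⟨j, by rw [ht0c]; simp [hj]⟩
  have hc1 := K1 Finset.univ Finset.univ α β hα hβ _ _ hxz X hdvd 1 (by simp) (by
    rw [← hs0c]; exact hpos1)
  rw [← hs0c, ← ht0c] at hc1
  have hcs := Finset.card_add_card_compl s0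
  have hct := Finset.card_add_card_compl t0
  have hc0 : s0.card + t0.card ≤ ∑ i ∈ s0, α i := by omega
  -- step 2
  have step2 : ∀ m, ¬ v (Sum.elim a b m) < v l := by
    intro m1 hm1
    obtain ⟨m, hmS, hmax⟩ := Finset.exists_max_image
      (Finset.univ.filter (fun m => v (Sum.elim a b m) < v l)) (fun m => v (Sum.elim a b m))
      ⟨m1, by simp [hm1]⟩
    set d := Sum.elim a b m with hd
    have hdl : v d < v l := by simpa using hmS
    have hmax' : ∀ m', v (Sum.elim a b m') < v l → v (Sum.elim a b m') ≤ v d := fun m' h =>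
      hmax m' (by simp [h])
    have hd0 : d ≠ 0 := hw0 m
    have hea : ∀ i ∉ s0, v (a i) = v l := fun i hi =>
      le_antisymm (hma i) (not_lt.1 (fun h => hi ((hs0m i).2 h)))
    have heb : ∀ i ∉ t0, v (b i) = v l := fun i hi =>
      le_antisymm (hmb i) (not_lt.1 (fun h => hi ((ht0m i).2 h)))
    have hpos0 : 0 < ∑ i ∈ s0, α i := by
      rcases m with i | j
      · exact Finset.sum_pos (fun i _ => hα i) ⟨i, (hs0m i).2 hdl⟩
      · rw [hE0]; exact Finset.sum_pos (fun i _ => hβ i) ⟨j, (ht0m j).2 hdl⟩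
    have hΓa := gam_val O s0 α a d l hea
    have hΓb := gam_val O t0 β b d l heb
    rw [← hE0, ← hE1] at hΓb
    rw [← hv] at hΓa hΓb
    have hvΓ : v d < v (gam s0 α a 0 d) := by
      rw [hΓa]
      rcases lt_or_ge (v d) 1 with h1 | h1
      · refine h1.trans_le (hg.trans ?_)
        rw [hvg, ← Finset.prod_mul_prod_compl s0, ← Finset.prod_pow_eq_pow_sum,
          ← Finset.prod_pow_eq_pow_sum]
        refine mul_le_mul' (Finset.prod_le_prod' fun i hi => ?_) (Finset.prod_le_prod' fun i _ => ?_)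
        · exact pow_le_pow_left₀ zero_le (hmax' (Sum.inl i) ((hs0m i).1 hi)) _
        · exact pow_le_pow_left₀ zero_le (hma i) _
      · calc v d = v d ^ 1 * 1 := by simp
          _ ≤ v d ^ (∑ i ∈ s0, α i) * 1 := by
            gcongr
            exact hpos0
          _ < v d ^ (∑ i ∈ s0, α i) * v l ^ (∑ i ∈ s0ᶜ, α i) := by
            apply mul_lt_mul_of_pos_left
            · exact one_lt_pow₀ hl1 hpos1.ne'
            · exact pow_pos (zero_lt_one.trans_le h1) _
    obtain ⟨x', z', U', hx', hz', hUU', hU', -, hxz', hdvd'⟩ := CL O α β a b hPQ 0 d hd0 s0 t0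
      (by intro i hi; rw [sub_zero]; exact hmax' (Sum.inl i) ((hs0m i).1 hi))
      (by intro i hi; rw [sub_zero, ← hv, hea i hi]; exact hdl)
      (by intro i hi; rw [sub_zero]; exact hmax' (Sum.inr i) ((ht0m i).1 hi))
      (by intro i hi; rw [sub_zero, ← hv, heb i hi]; exact hdl)
      (by rw [← hv, hΓa, hΓb]) (Or.inl ⟨rfl, hvΓ⟩)
    have hU' := hU' rfl
    subst hU'
    have := K3 s0 t0 α β hα hβ _ _ hxz' X hUU' hdvd' {1} (by
      intro r hr
      rw [Finset.mem_singleton] at hr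
      subst hr
      refine ⟨by simp, ?_⟩
      rcases m with i | j
      · left
        have hi : i ∈ s0 := (hs0m i).2 hdl
        refine ⟨i, hi, hone _ ?_⟩
        rw [hx' i hi, sub_zero]; exact div_self hd0
      · right
        have hj : j ∈ t0 := (ht0m j).2 hdl
        refine ⟨j, hj, hone _ ?_⟩
        rw [hz' j hj, sub_zero]; exact div_self hd0)
    rw [Finset.card_singleton] at this
    omega
  have hnear : ∀ m, v (Sum.elim a b m - l) < v l := by
    rintro (i | j)
    · have h0 : ¬ IsLocalRing.residue O (x i) = 0 := by
        rw [res0 _ _ (hxa i)]; exact step2 (Sum.inl i)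
      have h1 := (honly _ (Or.inl ⟨i, Finset.mem_univ _, rfl⟩)).resolve_left h0
      rw [← res0 (x i - 1) _ (by
        push_cast; rw [hxa, sub_div, div_self hl0]; rfl), map_sub, h1, map_one, sub_self]
    · have h0 : ¬ IsLocalRing.residue O (z j) = 0 := by
        rw [res0 _ _ (hzb j)]; exact step2 (Sum.inr j)
      have h1 := (honly _ (Or.inr ⟨j, Finset.mem_univ _, rfl⟩)).resolve_left h0
      rw [← res0 (z j - 1) _ (by
        push_cast; rw [hzb, sub_div, div_self hl0]; rfl), map_sub, h1, map_one, sub_self]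
  -- step 3
  obtain ⟨d0, hd0⟩ := IsAlgClosed.exists_pow_nat_eq l (show 0 < n by omega)
  have hd00 : d0 ≠ 0 := by
    rintro rfl
    rw [zero_pow (by omega)] at hd0
    exact hl0 hd0.symm
  have step3 : ∀ m, v (Sum.elim a b m - l) ≤ v d0 := by
    by_contra hcon
    push Not at hcon
    obtain ⟨m1, hm1⟩ := hcon
    obtain ⟨m, hmax⟩ := Finite.exists_max (fun m => v (Sum.elim a b m - l))
    set d := Sum.elim a b m - l with hd
    have hdd : v d0 < v d := hm1.trans_le (hmax m1)
    have hdne : d ≠ 0 := by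
      rintro h
      rw [h, map_zero] at hdd
      exact absurd hdd (not_lt.2 zero_le)
    have hΓ : v l < v (d ^ n) := by
      rw [← hd0, map_pow, map_pow]
      exact pow_lt_pow_left₀ hdd zero_le (by omega)
    obtain ⟨x', z', U', hx', hz', hUU', -, hU', hxz', hdvd'⟩ := CL O α β a b hPQ l d hdne
      Finset.univ Finset.univ
      (fun i _ => hmax (Sum.inl i)) (by simp) (fun i _ => hmax (Sum.inr i)) (by simp)
      (by simp [gam_univ, hαn, hβn]) (Or.inr ⟨hnear m, by rw [gam_univ, hαn]; exact hΓ⟩)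
    have hU' := hU' hl0
    subst hU'
    have := K3 Finset.univ Finset.univ α β hα hβ _ _ hxz' 1 hUU' hdvd' {0, 1} (by
      intro r' hr'
      simp only [Finset.mem_insert, Finset.mem_singleton] at hr'
      refine ⟨by simp, ?_⟩
      rcases hr' with rfl | rfl
      · have hzero : ∀ (u : O), (u : K) = 0 → IsLocalRing.residue O u = 0 := by
          intro u hu
          have : u = 0 := Subtype.ext hu
          rw [this, map_zero]
        rcases M with i | j
        · left
          refine ⟨i, Finset.mem_univ _, hzero _ ?_⟩
          rw [hx' i (Finset.mem_univ _), show a i - l = 0 from sub_self _, zero_div]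
        · right
          refine ⟨j, Finset.mem_univ _, hzero _ ?_⟩
          rw [hz' j (Finset.mem_univ _), show b j - l = 0 from sub_self _, zero_div]
      · rcases m with i | j
        · left
          refine ⟨i, Finset.mem_univ _, hone _ ?_⟩
          rw [hx' i (Finset.mem_univ _)]; exact div_self hdne
        · right
          refine ⟨j, Finset.mem_univ _, hone _ ?_⟩
          rw [hz' j (Finset.mem_univ _)]; exact div_self hdne)
    rw [Finset.card_pair zero_ne_one] at this
    omega
  -- conclusion
  have hvd0 : v d0 < v l := by
    have h1 : 1 < v d0 := by
      by_contra h
      have := pow_le_one₀ (n := n) zero_le (not_lt.1 h)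
      rw [← map_pow, hd0] at this
      exact absurd hl1 (not_lt.2 this)
    rw [← hd0, map_pow]
    calc v d0 = v d0 ^ 1 := (pow_one _).symm
      _ < v d0 ^ n := pow_lt_pow_right₀ h1 (by omega)
  obtain ⟨x', G, hx', hG, hP⟩ := CL_lift O Finset.univ α a l d0 hd00 (fun i _ => step3 (Sum.inl i))
    (by simp)
  obtain ⟨z', H, hz', hH, hQ⟩ := CL_lift O Finset.univ β b l d0 hd00 (fun i _ => step3 (Sum.inr i))
    (by simp)
  rw [gam_univ, hαn, hd0] at hP
  rw [gam_univ, hβn, hd0] at hQ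
  have hcomp : (pp Finset.univ α a).comp (C l + C d0 * X) -
      (pp Finset.univ β b).comp (C l + C d0 * X) = C l + C d0 * X := by
    rw [← sub_comp, hPQ, X_comp]
  have hlt1 : v (d0 / l) < 1 := by
    rw [map_div₀]; rwa [div_lt_one₀ (zero_lt_one.trans hl1)]
  set f : O := ⟨d0 / l, (O.valuation_le_one_iff _).1 hlt1.le⟩
  have hf : IsLocalRing.residue O f = 0 := by
    rw [IsLocalRing.residue_eq_zero_iff, O.valuation_lt_one_iff]; exact hlt1
  have hO : pp Finset.univ α x' * G - pp Finset.univ β z' * H = 1 + C f * X := by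
    apply Polynomial.map_injective O.subtype Subtype.val_injective
    rw [Polynomial.map_sub]
    apply mul_left_cancel₀ (C_ne_zero.2 hl0)
    rw [mul_sub, ← hP, ← hQ, hcomp]
    simp [f, mul_add]
    rw [← mul_assoc, ← C_mul, mul_div_cancel₀ _ hl0]
  have hfin := congrArg (Polynomial.map (IsLocalRing.residue O)) hO
  simp only [Polynomial.map_sub, Polynomial.map_mul, hG, hH, pp_map, Polynomial.map_C,
    Polynomial.map_add, Polynomial.map_one, hf] at hfin
  simp only [mul_one, map_zero, zero_mul, add_zero] at hfin
  exact ⟨_, _, hfin⟩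


lemma exists_valsub (h : ℂ) (hh : ¬ IsIntegral ℚ h) :
    ∃ O : ValuationSubring ℂ, (∀ x : ℂ, IsIntegral ℚ x → x ∈ O) ∧ h ∉ O := by
  have : IsIntegrallyClosedIn (integralClosure ℚ ℂ).toSubring ℂ :=
    inferInstanceAs (IsIntegrallyClosedIn (integralClosure ℚ ℂ) ℂ)
  obtain ⟨V, h1, h2⟩ := Subring.exists_le_valuationSubring_of_isIntegrallyClosedIn
    (R := (integralClosure ℚ ℂ).toSubring) (x := h) hh
  exact ⟨V, fun x hx => h1 hx, h2⟩

lemma charZero_res (O : ValuationSubring ℂ) (hO : ∀ x : ℂ, IsIntegral ℚ x → x ∈ O) :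
    CharZero (IsLocalRing.ResidueField O) := by
  apply charZero_of_inj_zero
  intro m hm
  by_contra h0
  have hmem : ((m : ℂ))⁻¹ ∈ O := by
    apply hO
    have : ((m : ℂ))⁻¹ = algebraMap ℚ ℂ (m : ℚ)⁻¹ := by simp
    rw [this]
    exact isIntegral_algebraMap
  have h1 : (m : O) * ⟨_, hmem⟩ = 1 := by
    apply Subtype.ext
    push_cast
    exact mul_inv_cancel₀ (Nat.cast_ne_zero.2 h0)
  have h2 := congrArg (IsLocalRing.residue O) h1
  rw [map_mul, map_natCast, hm, zero_mul, map_one] at h2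
  exact zero_ne_one h2

lemma field_to_C (F : Type*) [Field F] [Algebra ℚ F] [Algebra.FiniteType ℚ F] :
    Nonempty (F →+* ℂ) := by
  have : Module.Finite ℚ F := finite_of_finite_type_of_isJacobsonRing ℚ F
  have : Algebra.IsAlgebraic ℚ F := inferInstance
  let φ : F →ₐ[ℚ] ℂ := IsAlgClosed.lift
  exact ⟨φ.toRingHom⟩

lemma ring_to_C (B : Type*) [CommRing B] [Nontrivial B] [Algebra ℚ B] [Algebra.FiniteType ℚ B] :
    Nonempty (B →+* ℂ) := by
  obtain ⟨m, hm⟩ := Ideal.exists_maximal B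
  have : Algebra.FiniteType ℚ (B ⧸ m) :=
    Algebra.FiniteType.of_surjective (Ideal.Quotient.mkₐ ℚ m) (Ideal.Quotient.mkₐ_surjective ℚ m)
  obtain ⟨φ⟩ := @field_to_C (B ⧸ m) (Ideal.Quotient.field m) (Ideal.Quotient.algebra ℚ) this
  exact ⟨φ.comp (Ideal.Quotient.mk m)⟩

lemma transfer {k ι κ : Type*} [Field k] [CharZero k] [Fintype ι] [Fintype κ]
    (α : ι → ℕ) (β : κ → ℕ) (x : ι → k) (z : κ → k)
    (h : pp Finset.univ α x - pp Finset.univ β z = 1) :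
    ∃ (a : ι → ℂ) (b : κ → ℂ), pp Finset.univ α a - pp Finset.univ β b = 1 := by
  obtain ⟨B, hB⟩ : ∃ B : Subalgebra ℚ k, B = Algebra.adjoin ℚ (Set.range x ∪ Set.range z) := ⟨_, rfl⟩
  have hft : Algebra.FiniteType ℚ B := by
    rw [← Subalgebra.fg_iff_finiteType]
    exact Subalgebra.fg_def.2 ⟨_, (Set.finite_range x).union (Set.finite_range z), hB.symm⟩
  obtain ⟨ψ⟩ := ring_to_C B
  have hx : ∀ i, x i ∈ B := fun i => hB ▸ Algebra.subset_adjoin (Or.inl ⟨i, rfl⟩)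
  have hz : ∀ i, z i ∈ B := fun i => hB ▸ Algebra.subset_adjoin (Or.inr ⟨i, rfl⟩)
  let x' : ι → B := fun i => ⟨x i, hx i⟩
  let z' : κ → B := fun i => ⟨z i, hz i⟩
  have hBeq : pp Finset.univ α x' - pp Finset.univ β z' = 1 := by
    apply Polynomial.map_injective B.val.toRingHom Subtype.val_injective
    rw [Polynomial.map_sub, pp_map, pp_map, Polynomial.map_one]
    exact h
  refine ⟨fun i => ψ (x' i), fun i => ψ (z' i), ?_⟩
  rw [← pp_map, ← pp_map, ← Polynomial.map_sub, hBeq, Polynomial.map_one]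

lemma VP {ι κ : Type*} [Fintype ι] [Fintype κ] (n : ℕ) (hn : 2 ≤ n)
    (α : ι → ℕ) (β : κ → ℕ) (hα : ∀ i, 0 < α i) (hβ : ∀ j, 0 < β j)
    (hαn : ∑ i, α i = n) (hβn : ∑ j, β j = n) (hcard : Fintype.card ι + Fintype.card κ = n + 1)
    (a : ι → ℂ) (b : κ → ℂ)
    (hPQ : pp Finset.univ α a - pp Finset.univ β b = X)
    (hg : (pp Finset.univ α a).eval 0 ≠ 0)
    (j0 : κ) (hj0 : ¬ IsIntegral ℚ (b j0)) :
    ∃ (a : ι → ℂ) (b : κ → ℂ), pp Finset.univ α a - pp Finset.univ β b = 1 := by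
  classical
  suffices hO : ∃ O : ValuationSubring ℂ, (∀ x : ℂ, IsIntegral ℚ x → x ∈ O) ∧
      1 ≤ O.valuation ((pp Finset.univ α a).eval 0) ∧
      ∃ m, 1 < O.valuation (Sum.elim a b m) by
    obtain ⟨O, h1, h2, h3⟩ := hO
    have := charZero_res O h1
    obtain ⟨x, z, h⟩ := VP_res O n hn α β hα hβ hαn hβn hcard a b hPQ h2 h3
    exact transfer α β x z h
  by_cases hgi : IsIntegral ℚ ((pp Finset.univ α a).eval 0)
  · obtain ⟨O, h1, h2⟩ := exists_valsub _ hj0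
    refine ⟨O, h1, ?_, Sum.inr j0, ?_⟩
    · have := (O.valuation_le_one_iff _).2 (h1 _ hgi.inv)
      rw [map_inv₀] at this
      have hpos : 0 < O.valuation ((pp Finset.univ α a).eval 0) := by
        rw [zero_lt_iff]; exact (Valuation.ne_zero_iff _).2 hg
      rwa [inv_le_one₀ hpos] at this
    · exact not_le.1 (fun h => h2 ((O.valuation_le_one_iff _).1 h))
  · obtain ⟨O, h1, h2⟩ := exists_valsub _ hgi
    have hbig : 1 < O.valuation ((pp Finset.univ α a).eval 0) :=
      not_le.1 (fun h => h2 ((O.valuation_le_one_iff _).1 h))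
    refine ⟨O, h1, hbig.le, ?_⟩
    by_contra hcon
    push Not at hcon
    apply absurd hbig
    rw [not_lt, pp_eval, map_prod]
    refine Finset.prod_le_one' fun i _ => ?_
    rw [map_pow, zero_sub, Valuation.map_neg]
    exact pow_le_one₀ zero_le (hcon (Sum.inl i))


/-- the first variation of `pp` -/
noncomputable def ss {R ι : Type*} [CommRing R] [Fintype ι] [DecidableEq ι] (α : ι → ℕ) (a da : ι → R) :
    R[X] :=
  ∑ i, (∏ j ∈ Finset.univ.erase i, (X - C (a j)) ^ α j) *
    (C (α i * da i) * (X - C (a i)) ^ (α i - 1))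

lemma ss_eq {R ι : Type*} [CommRing R] [Fintype ι] [DecidableEq ι] (α : ι → ℕ) (hα : ∀ i, 0 < α i)
    (a da : ι → R) :
    ss α a da = pp Finset.univ (fun i => α i - 1) a *
      ∑ i, C (α i * da i) * ∏ j ∈ Finset.univ.erase i, (X - C (a j)) := by
  unfold ss pp
  rw [Finset.mul_sum]
  refine Finset.sum_congr rfl fun i _ => ?_
  have h : ∏ j ∈ Finset.univ.erase i, (X - C (a j)) ^ α j =
      (∏ j ∈ Finset.univ.erase i, (X - C (a j)) ^ (α j - 1)) *
        ∏ j ∈ Finset.univ.erase i, (X - C (a j)) := by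
    rw [← Finset.prod_mul_distrib]
    refine Finset.prod_congr rfl fun j _ => ?_
    rw [← pow_succ, Nat.sub_add_cancel (hα j)]
  rw [h, ← Finset.mul_prod_erase _ (fun i => (X - C (a i)) ^ (α i - 1)) (Finset.mem_univ i)]
  ring

lemma ss_zero {R ι : Type*} [CommRing R] [IsDomain R] [CharZero R] [Fintype ι] [DecidableEq ι]
    (α : ι → ℕ) (hα : ∀ i, 0 < α i) (a da : ι → R) (ha : Function.Injective a) (h : ss α a da = 0) :
    da = 0 := by
  rw [ss_eq α hα] at h
  have h1 := (mul_eq_zero.1 h).resolve_left (pp_monic _ _ _).ne_zero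
  funext i
  have h2 := congrArg (Polynomial.eval (a i)) h1
  rw [eval_finsetSum, Finset.sum_eq_single i] at h2
  · simp only [eval_mul, eval_C, eval_prod, eval_sub, eval_X, eval_zero, mul_eq_zero,
      Nat.cast_eq_zero, (hα i).ne', false_or] at h2
    refine h2.resolve_right (Finset.prod_ne_zero_iff.2 ?_)
    intro j hj
    exact sub_ne_zero.2 (fun hh => (Finset.ne_of_mem_erase hj) (ha hh).symm)
  · intro j _ hj
    rw [eval_mul, eval_prod, Finset.prod_eq_zero (i := i)]
    · simp
    · simp [hj.symm]
    · simp
  · simp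

lemma ss_degree {R ι : Type*} [CommRing R] [Nontrivial R] [Fintype ι] [DecidableEq ι]
    (α : ι → ℕ) (hα : ∀ i, 0 < α i) (a da : ι → R) (n : ℕ) (hn : ∑ i, α i = n) :
    (ss α a da).degree < n := by
  unfold ss
  rw [← mem_degreeLT]
  refine Submodule.sum_mem _ fun i _ => ?_
  rw [mem_degreeLT]
  refine lt_of_le_of_lt degree_le_natDegree ?_
  rw [Nat.cast_lt]
  have h1 : (∏ j ∈ Finset.univ.erase i, (X - C (a j)) ^ α j).natDegree =
      ∑ j ∈ Finset.univ.erase i, α j := pp_natDegree (Finset.univ.erase i) α a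
  have h2 : (C (α i * da i) * (X - C (a i)) ^ (α i - 1)).natDegree ≤ α i - 1 := by
    refine (natDegree_C_mul_le _ _).trans ?_
    rw [(monic_X_sub_C _).natDegree_pow]; simp
  have h3 := natDegree_mul_le (p := ∏ j ∈ Finset.univ.erase i, (X - C (a j)) ^ α j)
    (q := C (α i * da i) * (X - C (a i)) ^ (α i - 1))
  have h4 := Finset.add_sum_erase Finset.univ α (Finset.mem_univ i)
  have h5 := hα i
  omega

lemma PLker {K ι κ : Type*} [Field K] [CharZero K] [Fintype ι] [DecidableEq ι] [Fintype κ]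
    [DecidableEq κ] (n : ℕ)
    (α : ι → ℕ) (β : κ → ℕ) (hα : ∀ i, 0 < α i) (hβ : ∀ j, 0 < β j)
    (hαn : ∑ i, α i = n) (hβn : ∑ j, β j = n) (hcard : Fintype.card ι + Fintype.card κ = n + 1)
    (a : ι → K) (b : κ → K) (ha : Function.Injective a) (hb : Function.Injective b) (j0 : κ)
    (hab : ∀ i j, a i = b j → α i = 1 ∧ j = j0)
    (da : ι → K) (db : κ → K) (hj0 : db j0 = 0) (h : ss α a da = ss β b db) : da = 0 ∧ db = 0 := by
  set β' : κ → ℕ := fun j => if j = j0 then β j else β j - 1 with hβ'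
  have hda : pp Finset.univ (fun i => α i - 1) a ∣ ss α a da := by
    rw [ss_eq α hα]; exact dvd_mul_right _ _
  have hdb : pp Finset.univ β' b ∣ ss β b db := by
    unfold ss
    refine Finset.dvd_sum fun j _ => ?_
    by_cases hj : j = j0
    · subst hj; simp [hj0]
    · unfold pp
      rw [← Finset.prod_erase_mul _ _ (Finset.mem_univ j)]
      refine mul_dvd_mul (Finset.prod_dvd_prod_of_dvd _ _ fun i _ => pow_dvd_pow _ ?_) ?_
      · simp only [hβ']; split_ifs <;> omega
      · simp only [hβ', if_neg hj]; exact dvd_mul_left _ _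
  have hcop : IsCoprime (pp Finset.univ (fun i => α i - 1) a) (pp Finset.univ β' b) := by
    unfold pp
    refine IsCoprime.prod_left fun i _ => IsCoprime.prod_right fun j _ => ?_
    by_cases hij : a i = b j
    · simp [(hab i j hij).1, isCoprime_one_left]
    · exact IsCoprime.pow (isCoprime_X_sub_C_of_isUnit_sub (sub_ne_zero.2 hij).isUnit)
  rw [← h] at hdb
  have hd := hcop.mul_dvd hda hdb
  have hS : ss α a da = 0 := by
    by_contra hne
    have h1 := natDegree_le_of_dvd hd hne
    have h2 := (natDegree_lt_iff_degree_lt hne).2 (ss_degree α hα a da n hαn)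
    rw [(pp_monic _ _ _).natDegree_mul (pp_monic _ _ _), pp_natDegree, pp_natDegree] at h1
    have e1 : ∑ i, (α i - 1) + Fintype.card ι = n := by
      rw [← hαn, Fintype.card_eq_sum_ones, ← Finset.sum_add_distrib]
      exact Finset.sum_congr rfl fun i _ => Nat.sub_add_cancel (hα i)
    have e2 : ∑ j, β' j + Fintype.card κ = n + 1 := by
      have : ∑ j, (β' j + 1) = ∑ j, (β j + if j = j0 then 1 else 0) := by
        refine Finset.sum_congr rfl fun j _ => ?_
        simp only [hβ']
        have := hβ j
        split_ifs <;> omega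
      rw [Finset.sum_add_distrib, Finset.sum_add_distrib, hβn] at this
      simpa using this
    omega
  exact ⟨ss_zero α hα a da ha hS, ss_zero β hβ b db hb (h ▸ hS)⟩

lemma pp_hasDerivAt {ι : Type*} [Fintype ι] [DecidableEq ι] (α : ι → ℕ) (a da : ι → ℂ) (t : ℂ) :
    HasDerivAt (fun τ : ℂ => ∏ i, (t - (a i + τ * da i)) ^ α i) (- (ss α a da).eval t) 0 := by
  have h := HasDerivAt.fun_finsetProd (u := Finset.univ) (x := (0:ℂ))
    (f := fun i (τ : ℂ) => (t - (a i + τ * da i)) ^ α i)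
    (f' := fun i => (α i : ℂ) * (t - (a i + 0 * da i)) ^ (α i - 1) * (-(1 * da i)))
    (fun i _ => by
      have h0 : HasDerivAt (fun τ : ℂ => t - (a i + τ * da i)) (-(1 * da i)) 0 :=
        (((hasDerivAt_id (0:ℂ)).mul_const (da i)).const_add (a i)).const_sub t
      exact h0.pow (α i))
  refine h.congr_deriv ?_
  simp only [ss, eval_finsetSum, eval_mul, eval_prod, eval_pow, eval_sub, eval_X, eval_C, zero_mul,
    add_zero, smul_eq_mul, ← Finset.sum_neg_distrib]
  refine Finset.sum_congr rfl fun i _ => ?_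
  ring


/-- the evaluation map used for the inverse function theorem -/
noncomputable def GG {ι κ ι₂ : Type*} [Fintype κ] [Fintype ι₂] (n : ℕ) (β : κ → ℕ) (j0 : κ)
    (π : ι₂ → ι) (α₂ : ι₂ → ℕ) (c : ι₂ → ℂ) (L : ℂ[X])
    (w : ((ι → ℂ) × (κ → ℂ)) × ℂ) : ℂ × ℂ × (Fin n → ℂ) :=
  (w.2, w.1.2 j0, fun k => ∏ i, ((k : ℂ) - (w.1.1 (π i) + w.2 * c i)) ^ α₂ i -
    ∏ j, ((k : ℂ) - w.1.2 j) ^ β j - L.eval (k : ℂ))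

lemma GG_contDiff {ι κ ι₂ : Type*} [Fintype ι] [Fintype κ] [Fintype ι₂] (n : ℕ) (β : κ → ℕ) (j0 : κ)
    (π : ι₂ → ι) (α₂ : ι₂ → ℕ) (c : ι₂ → ℂ) (L : ℂ[X]) :
    ContDiff ℂ 1 (GG n β j0 π α₂ c L) := by
  unfold GG
  refine contDiff_snd.prodMk (ContDiff.prodMk (by fun_prop) ?_)
  rw [contDiff_pi]
  intro k
  refine ContDiff.sub (ContDiff.sub ?_ ?_) contDiff_const
  · exact contDiff_prod fun i _ => by fun_prop
  · exact contDiff_prod fun i _ => by fun_prop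

lemma prod_fiber {R ι ι₂ : Type*} [CommRing R] [Fintype ι] [DecidableEq ι] [Fintype ι₂]
    (π : ι₂ → ι) (α₂ : ι₂ → ℕ) (α : ι → ℕ) (hπ : ∀ i, ∑ k with π k = i, α₂ k = α i) (f : ι → R) :
    ∏ k, f (π k) ^ α₂ k = ∏ i, f i ^ α i := by
  rw [← Finset.prod_fiberwise Finset.univ π]
  refine Finset.prod_congr rfl fun i _ => ?_
  rw [← hπ i, ← Finset.prod_pow_eq_pow_sum]
  refine Finset.prod_congr rfl fun k hk => ?_
  rw [(Finset.mem_filter.1 hk).2]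

lemma GG_inj {ι κ ι₂ : Type*} [Fintype ι] [DecidableEq ι] [Fintype κ]
    [DecidableEq κ] [Fintype ι₂] (n : ℕ)
    (α : ι → ℕ) (β : κ → ℕ) (hα : ∀ i, 0 < α i) (hβ : ∀ j, 0 < β j)
    (hαn : ∑ i, α i = n) (hβn : ∑ j, β j = n) (hcard : Fintype.card ι + Fintype.card κ = n + 1)
    (a : ι → ℂ) (b : κ → ℂ) (ha : Function.Injective a) (hb : Function.Injective b) (j0 : κ)
    (hab : ∀ i j, a i = b j → α i = 1 ∧ j = j0)
    (π : ι₂ → ι) (α₂ : ι₂ → ℕ) (hπ : ∀ i, ∑ k with π k = i, α₂ k = α i) (c : ι₂ → ℂ)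
    (L : ℂ[X]) (w : ((ι → ℂ) × (κ → ℂ)) × ℂ)
    (hw : fderiv ℂ (GG n β j0 π α₂ c L) ((a, b), 0) w = 0) : w = 0 := by
  obtain ⟨⟨da, db⟩, du⟩ := w
  have hd : HasFDerivAt (GG n β j0 π α₂ c L) (fderiv ℂ (GG n β j0 π α₂ c L) ((a, b), 0)) ((a, b), 0) :=
    ((GG_contDiff n β j0 π α₂ c L).differentiable one_ne_zero _).hasFDerivAt
  have hline := hd.hasLineDerivAt ((da, db), du)
  rw [hw] at hline
  unfold HasLineDerivAt at hline
  have l1 := hline.fst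
  have l2 := hline.snd.fst
  have l3 := fun k => (hasDerivAt_pi.1 hline.snd.snd) k
  have hdu : du = 0 := by
    have e : HasDerivAt (fun t : ℂ => (0:ℂ) + t * du) (1 * du) 0 :=
      ((hasDerivAt_id (0:ℂ)).mul_const du).const_add 0
    have := e.unique l1
    simpa using this
  subst hdu
  have hdb : db j0 = 0 := by
    have e : HasDerivAt (fun t : ℂ => b j0 + t * db j0) (1 * db j0) 0 :=
      ((hasDerivAt_id (0:ℂ)).mul_const (db j0)).const_add (b j0)
    have := e.unique l2
    simpa using this
  have hev : ∀ k : Fin n, (ss α a da).eval (k : ℂ) = (ss β b db).eval (k : ℂ) := by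
    intro k
    have e := ((pp_hasDerivAt α a da (k : ℂ)).sub (pp_hasDerivAt β b db (k : ℂ))).sub_const
      (L.eval (k : ℂ))
    have e2 := l3 k
    have : (fun τ : ℂ => (GG n β j0 π α₂ c L (((a, b), 0) + τ • ((da, db), (0:ℂ)))).2.2 k) =
      fun τ : ℂ => ∏ i, ((k : ℂ) - (a i + τ * da i)) ^ α i - ∏ j, ((k : ℂ) - (b j + τ * db j)) ^ β j
        - L.eval (k : ℂ) := by
      funext τ
      rw [← prod_fiber π α₂ α hπ (fun i => ((k : ℂ) - (a i + τ * da i)))]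
      simp [GG]
    rw [this] at e2
    have := e.unique e2
    simp at this
    linear_combination -this
  have hss : ss α a da = ss β b db := by
    refine eq_of_degrees_lt_of_eval_index_eq (s := (Finset.univ : Finset (Fin n)))
      (v := fun k : Fin n => ((k : ℕ) : ℂ)) ?_ ?_ ?_ (fun k _ => hev k)
    · intro x _ y _ h
      exact Fin.ext (Nat.cast_injective h)
    · simpa using ss_degree α hα a da n hαn
    · simpa using ss_degree β hβ b db n hβn
  obtain ⟨h1, h2⟩ := PLker n α β hα hβ hαn hβn hcard a b ha hb j0 hab da db hdb hss
  simp [h1, h2]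

open Topology in
lemma PL {ι κ ι₂ : Type*} [Fintype ι] [DecidableEq ι] [Fintype κ]
    [DecidableEq κ] [Fintype ι₂] (n : ℕ)
    (α : ι → ℕ) (β : κ → ℕ) (hα : ∀ i, 0 < α i) (hβ : ∀ j, 0 < β j)
    (hαn : ∑ i, α i = n) (hβn : ∑ j, β j = n) (hcard : Fintype.card ι + Fintype.card κ = n + 1)
    (a : ι → ℂ) (b : κ → ℂ) (ha : Function.Injective a) (hb : Function.Injective b) (j0 : κ)
    (hab : ∀ i j, a i = b j → α i = 1 ∧ j = j0)
    (π : ι₂ → ι) (α₂ : ι₂ → ℕ) (hπ : ∀ i, ∑ k with π k = i, α₂ k = α i) (c : ι₂ → ℂ)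
    (L : ℂ[X]) (hL : L.degree < n) (hPQ : pp Finset.univ α a - pp Finset.univ β b = L)
    (W : Set ((ι → ℂ) × (κ → ℂ))) (hW : W ∈ 𝓝 (a, b)) :
    ∀ᶠ p : ℂ × ℂ in 𝓝 (0, b j0), ∃ s b', (s, b') ∈ W ∧ b' j0 = p.2 ∧
      pp Finset.univ α₂ (fun i => s (π i) + p.1 * c i) - pp Finset.univ β b' = L := by
  set G := GG n β j0 π α₂ c L with hG
  have hd : HasStrictFDerivAt G (fderiv ℂ G ((a, b), 0)) ((a, b), 0) :=
    (GG_contDiff n β j0 π α₂ c L).contDiffAt.hasStrictFDerivAt one_ne_zero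
  have hinj : Function.Injective (fderiv ℂ G ((a, b), 0)).toLinearMap := by
    rw [injective_iff_map_eq_zero]
    exact fun w hw => GG_inj n α β hα hβ hαn hβn hcard a b ha hb j0 hab π α₂ hπ c L w hw
  have hdim : Module.finrank ℂ (((ι → ℂ) × (κ → ℂ)) × ℂ) =
      Module.finrank ℂ (ℂ × ℂ × (Fin n → ℂ)) := by
    simp [Module.finrank_prod]
    omega
  have hsurj : Function.Surjective (fderiv ℂ G ((a, b), 0)).toLinearMap :=
    (LinearMap.injective_iff_surjective_of_finrank_eq_finrank hdim).1 hinj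
  have hmap := hd.map_nhds_eq_of_surj (LinearMap.range_eq_top.2 hsurj)
  have hG0 : G ((a, b), 0) = (0, b j0, 0) := by
    have : ∀ k : Fin n, ∏ i, ((k : ℂ) - a (π i)) ^ α₂ i - ∏ j, ((k : ℂ) - b j) ^ β j
        - L.eval (k : ℂ) = 0 := by
      intro k
      rw [prod_fiber π α₂ α hπ (fun i => ((k : ℂ) - a i)), ← hPQ, eval_sub, pp_eval, pp_eval]
      ring
    simp only [hG, GG, zero_mul, add_zero, this]
    rfl
  have hW' : {w : ((ι → ℂ) × (κ → ℂ)) × ℂ | w.1 ∈ W} ∈ 𝓝 (((a, b), 0) : ((ι → ℂ) × (κ → ℂ)) × ℂ) :=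
    continuous_fst.continuousAt hW
  have himg := Filter.image_mem_map (m := G) hW'
  rw [hmap, hG0] at himg
  have hcont : Filter.Tendsto (fun p : ℂ × ℂ => ((p.1, p.2, 0) : ℂ × ℂ × (Fin n → ℂ)))
      (𝓝 (0, b j0)) (𝓝 (0, b j0, 0)) := by
    have : Continuous (fun p : ℂ × ℂ => ((p.1, p.2, 0) : ℂ × ℂ × (Fin n → ℂ))) := by fun_prop
    exact this.tendsto (0, b j0)
  filter_upwards [hcont himg] with p hp
  obtain ⟨⟨⟨s, b'⟩, u⟩, hwW, hw⟩ := hp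
  simp only [hG, GG, Prod.mk.injEq] at hw
  obtain ⟨hu, hb', hk⟩ := hw
  subst hu
  refine ⟨s, b', hwW, hb', ?_⟩
  have hα₂n : ∑ i, α₂ i = n := by
    rw [← hαn, ← Finset.sum_fiberwise Finset.univ π]
    exact Finset.sum_congr rfl fun i _ => hπ i
  have hdeg : (pp Finset.univ α₂ (fun i => s (π i) + p.1 * c i) - pp Finset.univ β b').degree < n := by
    have d1 : (pp Finset.univ α₂ (fun i => s (π i) + p.1 * c i)).degree = n := by
      rw [degree_eq_natDegree (pp_monic _ _ _).ne_zero, pp_natDegree, hα₂n]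
    have d2 : (pp Finset.univ β b').degree = n := by
      rw [degree_eq_natDegree (pp_monic _ _ _).ne_zero, pp_natDegree, hβn]
    have := degree_sub_lt_left (d1.trans d2.symm) (pp_monic _ _ _).ne_zero (by
      rw [(pp_monic _ _ _).leadingCoeff, (pp_monic _ _ _).leadingCoeff])
    rwa [d1] at this
  refine eq_of_degrees_lt_of_eval_index_eq (s := (Finset.univ : Finset (Fin n)))
      (v := fun k : Fin n => ((k : ℕ) : ℂ)) ?_ ?_ ?_ (fun k _ => ?_)
  · intro x _ y _ h
    exact Fin.ext (Nat.cast_injective h)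
  · simpa using hdeg
  · simpa using hL
  · have := congrFun hk k
    simp only [Pi.zero_apply] at this
    rw [eval_sub, pp_eval, pp_eval]
    linear_combination this


lemma ss_one {R ι : Type*} [CommRing R] [Fintype ι] [DecidableEq ι] (α : ι → ℕ) (a : ι → R) :
    ss α a (fun _ => 1) = derivative (pp Finset.univ α a) := by
  unfold ss pp
  rw [derivative_prod_finset]
  refine Finset.sum_congr rfl fun i _ => ?_
  rw [derivative_X_sub_C_pow, mul_one]

lemma dist_aux {K ι κ : Type*} [Field K] [CharZero K] [Fintype ι] [Fintype κ] (n : ℕ) (hn : 1 ≤ n)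
    (α : ι → ℕ) (β : κ → ℕ) (hα : ∀ i, 0 < α i) (hβ : ∀ j, 0 < β j)
    (hαn : ∑ i, α i = n) (hβn : ∑ j, β j = n) (hcard : Fintype.card ι + Fintype.card κ = n + 1)
    (a : ι → K) (b : κ → K) (hcop : IsCoprime (pp Finset.univ α a) (pp Finset.univ β b))
    (hder : derivative (pp Finset.univ α a) = derivative (pp Finset.univ β b)) :
    Function.Injective a := by
  classical
  intro i i' hii
  by_contra hne
  have h1 : (X - C (a i)) * pp Finset.univ (fun i => α i - 1) a ∣ derivative (pp Finset.univ α a) := by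
    rw [← ss_one, ss_eq α hα, mul_comm]
    refine mul_dvd_mul_left _ ?_
    refine Finset.dvd_sum fun k _ => Dvd.dvd.mul_left ?_ _
    by_cases hk : k = i
    · rw [hii]
      exact Finset.dvd_prod_of_mem (fun j => X - C (a j)) (by simp [hk, Ne.symm hne])
    · exact Finset.dvd_prod_of_mem (fun j => X - C (a j)) (by simp [Ne.symm hk])
  have h2 : pp Finset.univ (fun j => β j - 1) b ∣ derivative (pp Finset.univ α a) := by
    rw [hder]; exact pp_sub_one_dvd_derivative _ _ _
  have hc1 : IsCoprime ((X - C (a i)) * pp Finset.univ (fun i => α i - 1) a)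
      (pp Finset.univ (fun j => β j - 1) b) := by
    have hc2 : IsCoprime (pp Finset.univ α a) (pp Finset.univ (fun j => β j - 1) b) :=
      hcop.of_isCoprime_of_dvd_right (pp_sub_one_dvd _ _ _)
    refine IsCoprime.mul_left (hc2.of_isCoprime_of_dvd_left ?_)
      (hc2.of_isCoprime_of_dvd_left (pp_sub_one_dvd _ _ _))
    exact (dvd_pow_self _ (hα i).ne').trans
      (Finset.dvd_prod_of_mem (fun j => (X - C (a j)) ^ α j) (Finset.mem_univ i))
  have hd := hc1.mul_dvd h1 h2
  have hne0 : derivative (pp Finset.univ α a) ≠ 0 := by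
    intro h
    have := natDegree_eq_zero_of_derivative_eq_zero h
    rw [pp_natDegree] at this
    omega
  have h3 := natDegree_le_of_dvd hd hne0
  have h4 : (derivative (pp Finset.univ α a)).natDegree < n := by
    rw [natDegree_lt_iff_degree_lt hne0, ← ss_one]
    exact ss_degree α hα a _ n hαn
  rw [((monic_X_sub_C _).mul (pp_monic _ _ _)).natDegree_mul (pp_monic _ _ _),
    (monic_X_sub_C _).natDegree_mul (pp_monic _ _ _), pp_natDegree, pp_natDegree,
    natDegree_X_sub_C] at h3
  have e1 : ∑ i, (α i - 1) + Fintype.card ι = n := by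
    rw [← hαn, Fintype.card_eq_sum_ones, ← Finset.sum_add_distrib]
    exact Finset.sum_congr rfl fun i _ => Nat.sub_add_cancel (hα i)
  have e2 : ∑ i, (β i - 1) + Fintype.card κ = n := by
    rw [← hβn, Fintype.card_eq_sum_ones, ← Finset.sum_add_distrib]
    exact Finset.sum_congr rfl fun i _ => Nat.sub_add_cancel (hβ i)
  omega

lemma dist_roots {K ι κ : Type*} [Field K] [CharZero K] [Fintype ι] [Fintype κ] (n : ℕ) (hn : 1 ≤ n)
    (α : ι → ℕ) (β : κ → ℕ) (hα : ∀ i, 0 < α i) (hβ : ∀ j, 0 < β j)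
    (hαn : ∑ i, α i = n) (hβn : ∑ j, β j = n) (hcard : Fintype.card ι + Fintype.card κ = n + 1)
    (a : ι → K) (b : κ → K) (h : pp Finset.univ α a - pp Finset.univ β b = 1) :
    Function.Injective a ∧ Function.Injective b ∧ ∀ i j, a i ≠ b j := by
  have hcop : IsCoprime (pp Finset.univ α a) (pp Finset.univ β b) :=
    ⟨1, -1, by linear_combination h⟩
  have hder : derivative (pp Finset.univ α a) = derivative (pp Finset.univ β b) := by
    rw [← sub_eq_zero, ← derivative_sub, h, derivative_one]
  refine ⟨dist_aux n hn α β hα hβ hαn hβn hcard a b hcop hder,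
    dist_aux n hn β α hβ hα hβn hαn (by omega) b a hcop.symm hder.symm, ?_⟩
  intro i j hij
  have h1 := congrArg (Polynomial.eval (a i)) h
  rw [eval_sub, pp_eval, pp_eval, Finset.prod_eq_zero (Finset.mem_univ i),
    Finset.prod_eq_zero (Finset.mem_univ j)] at h1
  · simp at h1
  · simp [hij, (hβ j).ne']
  · simp [(hα i).ne']

lemma pp_shift {K ι : Type*} [Field K] [Fintype ι] (α : ι → ℕ) (a : ι → K) (r : K) :
    pp Finset.univ α (fun i => a i - r) = (pp Finset.univ α a).comp (X + C r) := by
  unfold pp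
  rw [prod_comp]
  refine Finset.prod_congr rfl fun i _ => ?_
  simp only [pow_comp, sub_comp, X_comp, C_comp, C_sub]
  congr 1; ring

lemma pp_scale {K ι : Type*} [Field K] [Fintype ι] (α : ι → ℕ) (a : ι → K) (r : K) (hr : r ≠ 0) :
    pp Finset.univ α (fun i => r * a i) =
      C (r ^ (∑ i, α i)) * (pp Finset.univ α a).comp (C r⁻¹ * X) := by
  unfold pp
  rw [prod_comp, C_pow, ← Finset.prod_pow_eq_pow_sum, ← Finset.prod_mul_distrib]
  refine Finset.prod_congr rfl fun i _ => ?_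
  simp only [pow_comp, sub_comp, X_comp, C_comp, C_mul]
  have hrr : (C r * C r⁻¹ : K[X]) = 1 := by rw [← C_mul, mul_inv_cancel₀ hr, C_1]
  rw [← mul_pow, mul_sub, ← mul_assoc, hrr, one_mul]

lemma sol_symm {ι κ : Type*} [Fintype ι] [Fintype κ] (n : ℕ) (hn : 1 ≤ n)
    (α : ι → ℕ) (β : κ → ℕ) (hαn : ∑ i, α i = n) (hβn : ∑ j, β j = n)
    (h : ∃ (a : ι → ℂ) (b : κ → ℂ), pp Finset.univ α a - pp Finset.univ β b = 1) :
    ∃ (b : κ → ℂ) (a : ι → ℂ), pp Finset.univ β b - pp Finset.univ α a = 1 := by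
  obtain ⟨a, b, h⟩ := h
  obtain ⟨r, hr⟩ := IsAlgClosed.exists_pow_nat_eq (-1 : ℂ) (show 0 < n by omega)
  have hr0 : r ≠ 0 := by
    rintro rfl
    rw [zero_pow (by omega)] at hr
    norm_num at hr
  refine ⟨fun j => r * b j, fun i => r * a i, ?_⟩
  rw [pp_scale _ _ _ hr0, pp_scale _ _ _ hr0, hαn, hβn, hr, ← mul_sub, ← sub_comp,
    ← neg_sub, h]
  simp

lemma exists_transc (s : Set ℂ) (hs : s ∈ nhds (0:ℂ)) : ∃ h ∈ s, ¬ IsIntegral ℚ h := by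
  have hc : {x : ℂ | IsAlgebraic ℚ x}.Countable := Algebraic.countable ℚ ℂ
  have hd := hc.dense_compl ℝ
  obtain ⟨h, h1, h2⟩ := mem_closure_iff_nhds.1 (hd 0) s hs
  exact ⟨h, h1, fun hi => h2 hi.isAlgebraic⟩

lemma step (n : ℕ) (hn : 2 ≤ n) (ι κ : Type) [Fintype ι] [Fintype κ]
    (α : ι → ℕ) (β : κ → ℕ) (hα : ∀ i, 0 < α i) (hβ : ∀ j, 0 < β j)
    (hαn : ∑ i, α i = n) (hβn : ∑ j, β j = n) (hcard : Fintype.card ι + Fintype.card κ = n + 1)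
    (IH : ∀ (ι κ : Type) [Fintype ι] [Fintype κ]
      (α : ι → ℕ) (β : κ → ℕ), (∀ i, 0 < α i) → (∀ j, 0 < β j) → 
      (∑ i, α i = n - 1) → (∑ j, β j = n - 1) → Fintype.card ι + Fintype.card κ = n →
      ∃ (a : ι → ℂ) (b : κ → ℂ), pp Finset.univ α a - pp Finset.univ β b = 1)
    (i0 : ι) (hi0 : α i0 = 1) :
    ∃ (a : ι → ℂ) (b : κ → ℂ), pp Finset.univ α a - pp Finset.univ β b = 1 := by
  classical
  obtain ⟨j0, hj0⟩ : ∃ j, 2 ≤ β j := by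
    by_contra hcon
    push Not at hcon
    have h1 : ∀ j, β j = 1 := fun j => by have := hβ j; have := hcon j; omega
    simp only [h1, Finset.sum_const, Finset.card_univ, smul_eq_mul, mul_one] at hβn
    have h2 : Fintype.card ι = 1 := by omega
    obtain ⟨i1, hi1⟩ := Fintype.card_eq_one_iff.1 h2
    have h3 : ∑ i, α i = ∑ i : ι, 1 := Finset.sum_congr rfl fun i _ => by
      rw [hi1 i, ← hi1 i0, hi0]
    rw [h3] at hαn
    simp at hαn
    omega
  set β' : κ → ℕ := Function.update β j0 (β j0 - 1) with hβ'
  have hβ'j : ∀ j, j ≠ j0 → β' j = β j := fun j hj => by simp [hβ', hj]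
  have hβ'0 : β' j0 = β j0 - 1 := by simp [hβ']
  have hβ'pos : ∀ j, 0 < β' j := by
    intro j
    by_cases hj : j = j0
    · subst hj; rw [hβ'0]; omega
    · rw [hβ'j j hj]; exact hβ j
  have hαs : ∑ i : {i // i ≠ i0}, α i = n - 1 := by
    have h1 := Finset.add_sum_erase Finset.univ α (Finset.mem_univ i0)
    have h2 : ∑ i : {i // i ≠ i0}, α i = ∑ i ∈ Finset.univ.erase i0, α i := by
      symm
      exact Finset.sum_subtype _ (by simp) α
    omega
  have hβs : ∑ j, β' j = n - 1 := by
    have h1 := Finset.add_sum_erase Finset.univ β (Finset.mem_univ j0)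
    have h2 := Finset.add_sum_erase Finset.univ β' (Finset.mem_univ j0)
    have h3 : ∑ j ∈ Finset.univ.erase j0, β' j = ∑ j ∈ Finset.univ.erase j0, β j :=
      Finset.sum_congr rfl fun j hj => hβ'j j (Finset.ne_of_mem_erase hj)
    omega
  have hcι : Fintype.card {i // i ≠ i0} + Fintype.card κ = n := by
    have h1 : Fintype.card {i // i ≠ i0} = Fintype.card ι - 1 := by
      simp [Fintype.card_subtype_compl]
    have : 0 < Fintype.card ι := Fintype.card_pos_iff.2 ⟨i0⟩
    omega
  obtain ⟨a1, b1, h1⟩ := IH {i // i ≠ i0} κ (fun i => α i) β' (fun i => hα i) hβ'pos hαs hβs hcι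
  obtain ⟨ha1, hb1, hab1⟩   := dist_roots (n - 1) (by omega) (fun i : {i // i ≠ i0} => α i) β' (fun i => hα i)
    hβ'pos hαs hβs (by omega) a1 b1 h1
  set r := b1 j0
  set b : κ → ℂ := fun j => b1 j - r with hbdef
  set a : ι → ℂ := fun i => if h : i = i0 then 0 else a1 ⟨i, h⟩ - r with hadef
  have hb0 : b j0 = 0 := by simp [hbdef, r]
  have ha0 : a i0 = 0 := by simp [hadef]
  have hai : ∀ i (h : i ≠ i0), a i = a1 ⟨i, h⟩ - r := fun i h => by simp [hadef, h]
  have hb : Function.Injective b := fun x y h => hb1 (by simpa [hbdef] using h)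
  have ha : Function.Injective a := by
    intro x y h
    by_cases hx : x = i0 <;> by_cases hy : y = i0
    · rw [hx, hy]
    · rw [hx, ha0, hai y hy] at h
      exact absurd (sub_eq_zero.1 h.symm) (hab1 _ _)
    · rw [hy, ha0, hai x hx] at h
      exact absurd (sub_eq_zero.1 h) (hab1 _ _)
    · rw [hai x hx, hai y hy] at h
      have := ha1 (sub_left_injective h)
      exact congrArg Subtype.val this
  have hab : ∀ i j, a i = b j → α i = 1 ∧ j = j0 := by
    intro i j h
    by_cases hi : i = i0
    · subst hi
      refine ⟨hi0, hb ?_⟩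
      rw [← h, ha0, hb0]
    · rw [hai i hi] at h
      exact absurd (sub_left_injective h) (hab1 _ _)
  have hP : pp Finset.univ α a = X * pp Finset.univ (fun i : {i // i ≠ i0} => α i) (fun i => a1 i - r) := by
    unfold pp
    rw [← Finset.mul_prod_erase _ _ (Finset.mem_univ i0), ha0, hi0]
    simp only [map_zero, sub_zero, pow_one]
    congr 1
    rw [Finset.prod_subtype (p := fun i => i ≠ i0) _ (by simp)]
    refine Finset.prod_congr rfl fun i _ => ?_
    rw [hai i i.2]
  have hQ : pp Finset.univ β b = X * pp Finset.univ β' (fun j => b1 j - r) := by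
    unfold pp
    rw [← Finset.mul_prod_erase _ _ (Finset.mem_univ j0),
      ← Finset.mul_prod_erase Finset.univ (fun j => (X - C (b1 j - r)) ^ β' j) (Finset.mem_univ j0),
      ← mul_assoc]
    congr 1
    · have : b1 j0 - r = 0 := hb0
      rw [this, hb0, hβ'0]
      simp only [map_zero, sub_zero]
      rw [← pow_succ', Nat.sub_add_cancel (hβ j0)]
    · refine Finset.prod_congr rfl fun j hj => ?_
      rw [hβ'j j (Finset.ne_of_mem_erase hj)]
  have hPQ : pp Finset.univ α a - pp Finset.univ β b = X := by
    rw [hP, hQ, pp_shift, pp_shift, ← mul_sub, ← sub_comp, h1]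
    simp
  have hW : {w : (ι → ℂ) × (κ → ℂ) | ∀ j, j ≠ j0 → w.2 j ≠ 0} ∈ nhds (a, b) := by
    have : ∀ j, ∀ᶠ w : (ι → ℂ) × (κ → ℂ) in nhds (a, b), j ≠ j0 → w.2 j ≠ 0 := by
      intro j
      by_cases hj : j = j0
      · simp [hj]
      · have hc : Continuous (fun w : (ι → ℂ) × (κ → ℂ) => w.2 j) := by fun_prop
        have hne : b j ≠ 0 := fun h => hj (hb (h.trans hb0.symm))
        filter_upwards [hc.continuousAt.eventually_ne (x := (a, b)) hne] with w hw _ using hw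
    exact Filter.eventually_all.2 this
  have hpl := PL n α β hα hβ hαn hβn hcard a b ha hb j0 hab id α
    (fun i => by simp [Finset.sum_filter]) (fun _ => 0) X
    (by rw [degree_X]; exact_mod_cast (show 1 < n by omega)) hPQ _ hW
  rw [hb0] at hpl
  have hcont : Filter.Tendsto (fun h : ℂ => ((0 : ℂ), h)) (nhds 0) (nhds (0, 0)) := by
    have : Continuous (fun h : ℂ => ((0 : ℂ), h)) := by fun_prop
    exact this.tendsto 0
  obtain ⟨h, ⟨s, b', hw, hbj, hfin⟩, htr⟩ := exists_transc _ (hcont.eventually hpl)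
  simp only [id, mul_zero, add_zero] at hfin
  have hb'0 : ∀ j, b' j ≠ 0 := by
    intro j
    by_cases hj : j = j0
    · rw [hj, hbj]
      rintro h0
      apply htr
      simp only at h0
      rw [h0]; exact isIntegral_zero
    · exact hw j hj
  refine VP n hn α β hα hβ hαn hβn hcard s b' hfin ?_ j0 (by rw [hbj]; exact htr)
  have h2 := congrArg (Polynomial.eval 0) hfin
  rw [eval_sub, eval_X, sub_eq_zero] at h2
  have h3 : (pp Finset.univ α s).eval 0 = (pp Finset.univ β b').eval 0 := h2
  rw [h3, pp_eval, Finset.prod_ne_zero_iff]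
  intro j _
  exact pow_ne_zero _ (by simpa using hb'0 j)

lemma TA (n : ℕ) : ∀ (ι κ : Type) [Fintype ι] [Fintype κ]
    (α : ι → ℕ) (β : κ → ℕ), (∀ i, 0 < α i) → (∀ j, 0 < β j) →
    (∑ i, α i = n + 1) → (∑ j, β j = n + 1) → Fintype.card ι + Fintype.card κ = n + 2 →
      ∃ (a : ι → ℂ) (b : κ → ℂ), pp Finset.univ α a - pp Finset.univ β b = 1 := by
  induction n with
  | zero =>
    intro ι κ _ _ α β hα hβ hαn hβn hcard
    refine ⟨fun _ => 0, fun _ => 1, ?_⟩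
    unfold pp
    rw [Finset.prod_pow_eq_pow_sum, Finset.prod_pow_eq_pow_sum, hαn, hβn]
    simp
  | succ n ih =>
    intro ι κ _ _ α β hα hβ hαn hβn hcard
    by_cases h : ∃ i, α i = 1
    · obtain ⟨i0, hi0⟩ := h
      exact step (n + 2) (by omega) ι κ α β hα hβ hαn hβn hcard ih i0 hi0
    · obtain ⟨j0, hj0⟩ : ∃ j, β j = 1 := by
        by_contra h2
        push Not at h h2
        have e1 : ∑ i : ι, 2 ≤ ∑ i, α i := Finset.sum_le_sum fun i _ => by
          have := h i; have := hα i; omega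
        have e2 : ∑ i : κ, 2 ≤ ∑ i, β i := Finset.sum_le_sum fun i _ => by
          have := h2 i; have := hβ i; omega
        simp at e1 e2
        omega
      exact sol_symm (n + 2) (by omega) β α hβn hαn
        (step (n + 2) (by omega) κ ι β α hβ hα hβn hαn (by omega) ih j0 hj0)


/-- If `p + q ≥ n + 1` then there exist coprime monic `P, Q` with factorization
patterns `α, β` whose difference is a nonzero constant. -/
theorem stmt8 (n p q : ℕ) (hn : 1 ≤ n)
    (α : Fin p → ℕ) (β : Fin q → ℕ)
    (hα : ∀ i, 0 < α i) (hβ : ∀ j, 0 < β j)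
    (hαsum : ∑ i, α i = n) (hβsum : ∑ j, β j = n)
    (hpq : n + 1 ≤ p + q) :
    ∃ (P Q : ℂ[X]) (a : Fin p → ℂ) (b : Fin q → ℂ),
      Function.Injective a ∧ Function.Injective b ∧
      P = ∏ i, (X - C (a i)) ^ α i ∧
      Q = ∏ j, (X - C (b j)) ^ β j ∧
      IsCoprime P Q ∧
      ∃ c : ℂ, c ≠ 0 ∧ P - Q = C c := by
  have hp : p ≤ n := by
    have := Finset.card_nsmul_le_sum Finset.univ α 1 (fun i _ => hα i)
    simpa [hαsum] using this
  have hq : q ≤ n := by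
    have := Finset.card_nsmul_le_sum Finset.univ β 1 (fun i _ => hβ i)
    simpa [hβsum] using this
  obtain ⟨r, hr⟩ : ∃ r, r + 1 + q = n + 1 := ⟨n - q, by omega⟩
  let π : Fin p → Fin (r + 1) := fun i => ⟨min i r, by omega⟩
  have hsurj : ∀ k, ∃ i, π i = k := by
    intro k
    refine ⟨⟨k, by omega⟩, ?_⟩
    apply Fin.ext
    simp only [π]
    omega
  let α' : Fin (r + 1) → ℕ := fun k => ∑ i with π i = k, α i
  have hα' : ∀ k, 0 < α' k := by
    intro k
    obtain ⟨i, hi⟩ := hsurj k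
    exact Finset.sum_pos (fun i _ => hα i) ⟨i, by simp [hi]⟩
  have hα's : ∑ k, α' k = n := by
    rw [← hαsum]
    exact Finset.sum_fiberwise _ _ _
  have hcard : Fintype.card (Fin (r + 1)) + Fintype.card (Fin q) = n + 1 := by simpa using hr
  obtain ⟨a, b, h⟩ := TA (n - 1) (Fin (r + 1)) (Fin q) α' β hα' hβ (by omega) (by omega) (by omega)
  obtain ⟨ha, hb, hab⟩ := dist_roots n hn α' β hα' hβ hα's hβsum hcard a b h
  have hev : ∀ᶠ w : ((Fin (r + 1) → ℂ) × (Fin q → ℂ)) × ℂ in nhds ((a, b), 0),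
      (∀ i i' : Fin p, π i ≠ π i' → w.1.1 (π i) + w.2 * (i : ℕ) ≠ w.1.1 (π i') + w.2 * (i' : ℕ)) ∧
      (∀ j j' : Fin q, j ≠ j' → w.1.2 j ≠ w.1.2 j') := by
    refine Filter.Eventually.and ?_ ?_
    · refine Filter.eventually_all.2 fun i => Filter.eventually_all.2 fun i' => ?_
      by_cases hii : π i = π i'
      · simp [hii]
      · have hc : Continuous (fun w : ((Fin (r + 1) → ℂ) × (Fin q → ℂ)) × ℂ =>
            (w.1.1 (π i) + w.2 * (i : ℕ)) - (w.1.1 (π i') + w.2 * (i' : ℕ))) := by fun_prop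
        have hne : a (π i) + 0 * (i : ℕ) - (a (π i') + 0 * (i' : ℕ)) ≠ 0 := by
          simpa [sub_eq_zero] using fun h => hii (ha h)
        filter_upwards [hc.continuousAt.eventually_ne (x := ((a, b), 0)) hne] with w hw _
        exact sub_ne_zero.1 hw
    · refine Filter.eventually_all.2 fun i => Filter.eventually_all.2 fun i' => ?_
      by_cases hii : i = i'
      · simp [hii]
      · have hc : Continuous (fun w : ((Fin (r + 1) → ℂ) × (Fin q → ℂ)) × ℂ =>
            w.1.2 i - w.1.2 i') := by fun_prop
        have hne : b i - b i' ≠ 0 := sub_ne_zero.2 fun h => hii (hb h)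
        filter_upwards [hc.continuousAt.eventually_ne (x := ((a, b), 0)) hne] with w hw _
        exact sub_ne_zero.1 hw
  obtain ⟨W, hW, V, hV, hWV⟩ := mem_nhds_prod_iff.1 hev
  have hpl := PL n α' β hα' hβ hα's hβsum hcard a b ha hb (⟨0, by omega⟩ : Fin q)
    (fun i j hij => absurd hij (hab i j)) π α (fun _ => rfl) (fun i => ((i : ℕ) : ℂ)) 1
    (by rw [degree_one]; exact_mod_cast hn) h W hW
  have hcont : Filter.Tendsto (fun h : ℂ => (h, b ⟨0, by omega⟩)) (nhds 0)
      (nhds (0, b ⟨0, by omega⟩)) := by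
    have : Continuous (fun h : ℂ => (h, b ⟨0, by omega⟩)) := by fun_prop
    exact this.tendsto 0
  have hu := ((hcont.eventually hpl).and hV)
  have hu' := (hu.filter_mono (nhdsWithin_le_nhds (s := {0}ᶜ))).and self_mem_nhdsWithin
  obtain ⟨u, ⟨⟨s, b', hsW, -, hfin⟩, huV⟩, hu0⟩ := hu'.exists
  have hu0 : u ≠ 0 := hu0
  obtain ⟨h1, h2⟩ := hWV (Set.mk_mem_prod hsW huV)
  refine ⟨_, _, fun i => s (π i) + u * (i : ℕ), b', ?_, ?_, rfl, rfl, ?_, 1, one_ne_zero, ?_⟩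
  · intro i i' hii
    by_cases hπ : π i = π i'
    · simp only [hπ, add_right_inj] at hii
      have := mul_left_cancel₀ hu0 hii
      exact Fin.ext (by exact_mod_cast this)
    · exact absurd hii (h1 i i' hπ)
  · intro j j' hj
    by_contra hne
    exact h2 j j' hne hj
  · refine ⟨1, -1, ?_⟩
    unfold pp at hfin
    linear_combination hfin
  · rw [C_1]
    exact hfin
end
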